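/- arXiv:1307.8111 — 3 statements merged into one kernel-verified Lean document; each statement's English description precedes it below -/
import Mathlib

section
/- Let C₁ and C₂ be Cantor sets in ℝ³ with C₁ contained in the closed unit ball centered at (-1,0,0), C₂ contained in the closed unit ball centered at (1,0,0), and C₁ ∩ C₂ = {(0,0,0)}. If ℝ³ \ C₂ is simply connected, then the fundamental group of ℝ³ \ (C₁ ∪ C₂) (at a basepoint in the complement, e.g. (0,0,5)) is isomorphic to the fundamental group of ℝ³ \ C₁ (at the same basepoint). -/
open Metric Set

noncomputable section

/-- ℝ³ as Euclidean space. -/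
abbrev R3 : Type := EuclideanSpace ℝ (Fin 3)

/-- The point (a, b, c) of ℝ³. -/
def pt (a b c : ℝ) : R3 := (WithLp.equiv 2 (Fin 3 → ℝ)).symm ![a, b, c]

/-- A Cantor set in ℝ³: a nonempty compact perfect totally disconnected subset. -/
def IsCantorSubset (C : Set R3) : Prop :=
  C.Nonempty ∧ IsCompact C ∧ Perfect C ∧ IsTotallyDisconnected C

open CategoryTheory FundamentalGroupoid

/-!
Let `c` be the centre of the second ball. Inversion in the unit sphere around the tangency point
preserves the half-space `⟪c, x⟫ ≤ 0`, which contains the first set, and carries the second ball to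
the disjoint half-space `1 / 2 ≤ ⟪c, x⟫`. The inverted sets `A₁`, `A₂` are therefore separated by an
empty slab, and pushing everything down below the slab maps the complement of `A₁` to the
complement of `A₁ ∪ A₂`. Following this map by the inclusion gives a map homotopic to the identity.
The other composite is naturally isomorphic to the identity on the fundamental groupoid: below the
top of the slab the components are the tracks of a straight-line homotopy, and above its bottom
they are arbitrary paths, since that region is a retract of the complement of `A₂` and hence simply
connected. Naturality only has to be checked on these two pieces, so the inclusion induces an
equivalence of fundamental groupoids.
-/

section GroupoidEquivalence

variable {X Y : Type*} [TopologicalSpace X] [TopologicalSpace Y]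

/-- The functor of fundamental groupoids induced by the inclusion of a subset. -/
abbrev mapSubtypeVal (S : Set X) : FundamentalGroupoid S ⥤ FundamentalGroupoid X :=
  map ((ContinuousMap.id X).restrict S)

theorem map_map_mapSubtypeVal_map (ρ : C(X, Y)) {S : Set X} {x y : FundamentalGroupoid S}
    (f : x ⟶ y) : (map ρ).map ((mapSubtypeVal S).map f) = (map (ρ.restrict S)).map f :=
  (Path.Homotopic.Quotient.map_comp (f := (ContinuousMap.id X).restrict S) (g := ρ)).symm

theorem morphismProperty_mk_of_forall_mem {W : MorphismProperty (FundamentalGroupoid X)}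
    {S : Set X} (hW : ∀ ⦃x y : FundamentalGroupoid S⦄ (f : x ⟶ y), W ((mapSubtypeVal S).map f))
    {a b : X} (γ : Path a b) (hγ : ∀ s, γ s ∈ S) : W (fromPath (.mk γ)) := by
  let lift : Path (⟨a, γ.source ▸ hγ 0⟩ : S) ⟨b, γ.target ▸ hγ 1⟩ :=
    { toFun s := ⟨γ s, hγ s⟩
      source' := Subtype.ext γ.source
      target' := Subtype.ext γ.target }
  exact hW (fromPath (.mk lift))

theorem morphismProperty_eq_top_of_iUnion_interior {ι : Type*} {S : ι → Set X}
    (hS : ⋃ i, interior (S i) = univ) (W : MorphismProperty (FundamentalGroupoid X))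
    [W.IsMultiplicative]
    (hW : ∀ i ⦃x y : FundamentalGroupoid (S i)⦄ (f : x ⟶ y), W ((mapSubtypeVal (S i)).map f)) :
    W = ⊤ := by
  ext ⟨a⟩ ⟨b⟩ f
  refine iff_of_true ?_ trivial
  induction f using Path.Homotopic.Quotient.ind with | mk γ
  obtain ⟨t, ht₀, ht_mono, ⟨n, hn⟩, ht_sub⟩ := exists_monotone_Icc_subset_open_cover_unitInterval
    (c := fun i ↦ γ ⁻¹' interior (S i)) (fun i ↦ isOpen_interior.preimage γ.continuous)
    (by rw [← preimage_iUnion, hS, preimage_univ])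
  have piece_mem : ∀ k, W (fromPath (.mk (γ.subpath (t k) (t (k + 1))))) := by
    intro k
    obtain ⟨i, hi⟩ := ht_sub k
    refine morphismProperty_mk_of_forall_mem (hW i) _ (range_subset_iff.1 ?_)
    rw [Path.range_subpath_of_le _ _ _ (ht_mono k.le_succ)]
    exact (image_subset_iff.2 hi).trans interior_subset
  have initial_mem : ∀ k, W (fromPath (.mk (γ.subpath (t 0) (t k)))) := by
    intro k
    induction k with
    | zero => rw [Path.subpath_self]; exact W.id_mem (mk _)
    | succ k ih =>
      have concat : Path.Homotopic.Quotient.mk (γ.subpath (t 0) (t (k + 1))) =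
          .mk ((γ.subpath (t 0) (t k)).trans (γ.subpath (t k) (t (k + 1)))) :=
        Path.Homotopic.Quotient.eq.2 ⟨(Path.Homotopy.subpathTransSubpath γ _ _ _).symm⟩
      rw [concat]
      exact W.comp_mem _ _ ih (piece_mem k)
  have of_cast : ∀ {a' b' : X} (ha : a' = a) (hb : b' = b),
      W (fromPath (.mk (γ.cast ha hb))) → W (fromPath (.mk γ)) := by
    rintro _ _ rfl rfl h
    exact h
  have full_mem := initial_mem n
  rw [ht₀, hn n le_rfl, Path.subpath_zero_one] at full_mem
  exact of_cast _ _ full_mem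

/-- Glues a natural transformation of functors on the fundamental groupoid from components that are
natural on each member of a family of subsets whose interiors cover the space. -/
def natTransOfInteriorCover {D : Type*} [Category* D] {ι : Type*} {S : ι → Set X}
    (hS : ⋃ i, interior (S i) = univ) {F G : FundamentalGroupoid X ⥤ D}
    (α : ∀ x, F.obj x ⟶ G.obj x)
    (hα : ∀ i ⦃x y : FundamentalGroupoid (S i)⦄ (f : x ⟶ y),
      MorphismProperty.naturalityProperty α ((mapSubtypeVal (S i)).map f)) :
    F ⟶ G where
  app := α
  naturality _ _ f := (morphismProperty_eq_top_of_iUnion_interior hS _ hα).ge f trivial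

theorem mapSubtypeVal_map_comp_evalAt {ρ : C(X, X)} {U : Set X}
    (H : ((ContinuousMap.id X).restrict U).Homotopy (ρ.restrict U))
    {x y : FundamentalGroupoid U} (f : x ⟶ y) :
    (mapSubtypeVal U).map f ≫ fromPath (.mk (H.evalAt y.as)) =
      fromPath (.mk (H.evalAt x.as)) ≫ (map ρ).map ((mapSubtypeVal U).map f) := by
  rw [map_map_mapSubtypeVal_map]
  exact (FundamentalGroupoidFunctor.homotopicMapsNatIso H).naturality f

theorem mapSubtypeVal_map_comp_of_simplyConnected {ρ : C(X, X)} {V : Set X} (hρV : MapsTo ρ V V)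
    [SimplyConnectedSpace V] {x y : FundamentalGroupoid V} (f : x ⟶ y)
    (gx : x ⟶ mk (hρV.restrict ρ V V x.as)) (gy : y ⟶ mk (hρV.restrict ρ V V y.as)) :
    (mapSubtypeVal V).map f ≫ (mapSubtypeVal V).map gy =
      (mapSubtypeVal V).map gx ≫ (map ρ).map ((mapSubtypeVal V).map f) := by
  let ρV : C(V, V) := ⟨hρV.restrict, ρ.continuous.restrict hρV⟩
  have square : f ≫ gy = gx ≫ (map ρV).map f :=
    Subsingleton.elim (α := Path.Homotopic.Quotient x.as (ρV y.as)) _ _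
  have map_ρ : (mapSubtypeVal V).map ((map ρV).map f) = (map ρ).map ((mapSubtypeVal V).map f) :=
    (Path.Homotopic.Quotient.map_comp (f := ρV) (g := (ContinuousMap.id X).restrict V)).symm.trans
      (map_map_mapSubtypeVal_map ρ f).symm
  rw [← map_ρ]
  exact ((mapSubtypeVal V).map_comp f gy).symm.trans
    ((congrArg (mapSubtypeVal V).map square).trans ((mapSubtypeVal V).map_comp gx _))

theorem exists_hom_eq_evalAt_and_eq_map {ρ : C(X, X)} {U V : Set X}
    (H : ((ContinuousMap.id X).restrict U).Homotopy (ρ.restrict U))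
    (hHV : ∀ s, ∀ x : U, x.1 ∈ V → H (s, x) ∈ V) (hρV : MapsTo ρ V V)
    [PathConnectedSpace V] (hUV : U ∪ V = univ) (x : X) :
    ∃ α : mk x ⟶ mk (ρ x), (∀ hU : x ∈ U, α = fromPath (.mk (H.evalAt ⟨x, hU⟩))) ∧
      ∀ hV : x ∈ V, ∃ g : mk (⟨x, hV⟩ : V) ⟶ mk ⟨ρ x, hρV hV⟩, α = (mapSubtypeVal V).map g := by
  by_cases hU : x ∈ U
  · refine ⟨fromPath (.mk (H.evalAt ⟨x, hU⟩)), fun _ ↦ rfl, fun hV ↦ ?_⟩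
    let track : Path (⟨x, hV⟩ : V) ⟨ρ x, hρV hV⟩ :=
      { toFun s := ⟨H (s, ⟨x, hU⟩), hHV s _ hV⟩
        source' := Subtype.ext (H.apply_zero _)
        target' := Subtype.ext (H.apply_one _) }
    exact ⟨fromPath (.mk track), rfl⟩
  · have hV : x ∈ V := (hUV.ge (mem_univ x)).resolve_left hU
    let p := PathConnectedSpace.somePath (⟨x, hV⟩ : V) ⟨ρ x, hρV hV⟩
    exact ⟨(mapSubtypeVal V).map (fromPath (.mk p)), fun h ↦ (hU h).elim, fun _ ↦ ⟨_, rfl⟩⟩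

theorem nonempty_natTrans_id_map_of_homotopy_of_simplyConnected {ρ : C(X, X)} {U V : Set X}
    (H : ((ContinuousMap.id X).restrict U).Homotopy (ρ.restrict U))
    (hHV : ∀ s, ∀ x : U, x.1 ∈ V → H (s, x) ∈ V) (hρV : MapsTo ρ V V)
    [SimplyConnectedSpace V] (hUV : interior U ∪ interior V = univ) :
    Nonempty (𝟭 (FundamentalGroupoid X) ⟶ map ρ) := by
  have cover : U ∪ V = univ :=
    univ_subset_iff.1 (hUV.ge.trans (union_subset_union interior_subset interior_subset))
  choose α hαU hαV using exists_hom_eq_evalAt_and_eq_map H hHV hρV cover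
  let α' : ∀ x : FundamentalGroupoid X, (𝟭 _ : _ ⥤ _).obj x ⟶ (map ρ).obj x := fun x ↦ α x.as
  have natural_on_U : ∀ ⦃x y : FundamentalGroupoid U⦄ (f : x ⟶ y),
      MorphismProperty.naturalityProperty α' ((mapSubtypeVal U).map f) := by
    intro x y f
    change _ ≫ α y.as = α x.as ≫ _
    rw [hαU x.as x.as.2, hαU y.as y.as.2]
    exact mapSubtypeVal_map_comp_evalAt H f
  have natural_on_V : ∀ ⦃x y : FundamentalGroupoid V⦄ (f : x ⟶ y),
      MorphismProperty.naturalityProperty α' ((mapSubtypeVal V).map f) := by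
    intro x y f
    obtain ⟨gx, hgx⟩ := hαV x.as x.as.2
    obtain ⟨gy, hgy⟩ := hαV y.as y.as.2
    change _ ≫ α y.as = α x.as ≫ _
    rw [hgx, hgy]
    exact mapSubtypeVal_map_comp_of_simplyConnected hρV f gx gy
  exact ⟨natTransOfInteriorCover (S := fun b : Bool ↦ cond b U V)
    (iUnion_eq_univ_iff.2 fun x ↦ (hUV.ge (mem_univ x)).elim (⟨true, ·⟩) (⟨false, ·⟩)) α'
    (by rintro (_ | _); exacts [natural_on_V, natural_on_U])⟩

theorem simplyConnectedSpace_of_leftInverse {i : C(X, Y)} {r : C(Y, X)}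
    (h : Function.LeftInverse r i) [SimplyConnectedSpace Y] : SimplyConnectedSpace X := by
  refine simply_connected_iff_paths_homotopic.2 ⟨h.surjective.pathConnectedSpace r.continuous, ?_⟩
  have map_retraction : map i ⋙ map r = 𝟭 _ := by
    rw [← FundamentalGroupoid.map_comp, ← FundamentalGroupoid.map_id]
    exact congrArg map (ContinuousMap.ext h)
  have faithful : (map i).Faithful := Functor.Faithful.of_comp_eq map_retraction
  refine fun x y ↦ ⟨fun p q ↦ (map i).map_injective (X := mk x) (Y := mk y) ?_⟩
  exact Subsingleton.elim (α := Path.Homotopic.Quotient (i x) (i y)) _ _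

theorem isEquivalence_map_of_natTrans_of_homotopic (j : C(X, Y)) (r : C(Y, X))
    (α : 𝟭 (FundamentalGroupoid X) ⟶ map (r.comp j)) (h : (j.comp r).Homotopic (.id Y)) :
    (map j).IsEquivalence := by
  have unit : 𝟭 (FundamentalGroupoid X) ≅ map j ⋙ map r :=
    have := NatIso.isIso_of_isIso_app α
    asIso α ≪≫ eqToIso (FundamentalGroupoid.map_comp r j)
  have counit : map r ⋙ map j ≅ 𝟭 (FundamentalGroupoid Y) :=
    eqToIso (FundamentalGroupoid.map_comp j r).symm ≪≫
      asIso (FundamentalGroupoidFunctor.homotopicMapsNatIso h.some) ≪≫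
      eqToIso FundamentalGroupoid.map_id
  exact (CategoryTheory.Equivalence.mk (map j) (map r) unit counit).isEquivalence_functor

theorem isEquivalence_map_homeomorph (e : X ≃ₜ Y) : (map (e : C(X, Y))).IsEquivalence :=
  isEquivalence_map_of_natTrans_of_homotopic (e : C(X, Y)) e.symm
    (eqToHom (by rw [e.symm_comp_toContinuousMap, FundamentalGroupoid.map_id]))
    (by rw [e.toContinuousMap_comp_symm])

/-- The inclusion of the complement of `A₁ ∪ A₂` into the complement of `A₁`. -/
abbrev complUnionInclusion (A₁ A₂ : Set X) : C(↥(A₁ ∪ A₂)ᶜ, ↥A₁ᶜ) :=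
  ContinuousMap.inclusion (compl_subset_compl.2 subset_union_left)

end GroupoidEquivalence

section PushDown

variable {E : Type*} [AddCommGroup E] [Module ℝ E] [TopologicalSpace E]

/-- The flow at time `s` pushing the part of `E` above the hyperplane `ℓ = m` down along `c`; when
`ℓ c = 1` it lowers the excess height `ℓ x - m` by the factor `1 - s`. Replacing `(ℓ, c, m)` by
`(-ℓ, -c, -m)` gives the push upwards. -/
def pushDown (ℓ : E →L[ℝ] ℝ) (c : E) (m s : ℝ) (x : E) : E := x - (s * max (ℓ x - m) 0) • c

variable {ℓ : E →L[ℝ] ℝ} {c : E} {m s : ℝ} {x : E}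

theorem continuous_pushDown [IsTopologicalAddGroup E] [ContinuousSMul ℝ E]
    (ℓ : E →L[ℝ] ℝ) (c : E) (m : ℝ) :
    Continuous fun p : ℝ × E ↦ pushDown ℓ c m p.1 p.2 := by
  unfold pushDown
  fun_prop

theorem pushDown_zero : pushDown ℓ c m 0 x = x := by simp [pushDown]

theorem pushDown_of_le (hx : ℓ x ≤ m) : pushDown ℓ c m s x = x := by
  simp [pushDown, max_eq_right (sub_nonpos.2 hx)]

theorem apply_pushDown (hc : ℓ c = 1) : ℓ (pushDown ℓ c m s x) = ℓ x - s * max (ℓ x - m) 0 := by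
  simp [pushDown, hc]

theorem apply_pushDown_one (hc : ℓ c = 1) : ℓ (pushDown ℓ c m 1 x) = min (ℓ x) m := by
  rw [apply_pushDown hc]
  rcases le_total (ℓ x) m with h | h <;> simp [h]

theorem apply_pushUp_one (hc : ℓ c = 1) : ℓ (pushDown (-ℓ) (-c) (-m) 1 x) = max (ℓ x) m := by
  have height := apply_pushDown_one (ℓ := -ℓ) (c := -c) (m := -m) (x := x) (by simpa)
  rwa [neg_apply, neg_apply, min_neg_neg, neg_inj] at height

theorem apply_pushDown_le (hc : ℓ c = 1) (hs : 0 ≤ s) : ℓ (pushDown ℓ c m s x) ≤ ℓ x := by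
  rw [apply_pushDown hc]
  exact sub_le_self _ (mul_nonneg hs (le_max_right _ _))

theorem le_apply_pushDown (hc : ℓ c = 1) (hs : s ≤ 1) (hx : m ≤ ℓ x) :
    m ≤ ℓ (pushDown ℓ c m s x) := by
  rw [apply_pushDown hc, max_eq_left (sub_nonneg.2 hx)]
  linarith [mul_le_of_le_one_left (sub_nonneg.2 hx) hs]

theorem pushDown_notMem {A : Set E} (hc : ℓ c = 1) (hs : s ∈ Icc 0 1)
    (hA : ∀ z ∈ A, ℓ z < m ∨ ℓ x < ℓ z) (hx : x ∉ A) : pushDown ℓ c m s x ∉ A := by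
  rcases le_total (ℓ x) m with h | h
  · rwa [pushDown_of_le h]
  · intro hz
    rcases hA _ hz with hz | hz
    · exact hz.not_ge (le_apply_pushDown hc hs.2 h)
    · exact hz.not_ge (apply_pushDown_le hc hs.1)

/-- The slab `m ≤ ℓ < t` avoids both sets and has `A₁` below it and the rest of `A₂` above it. -/
structure SlabSeparates (ℓ : E →L[ℝ] ℝ) (m t : ℝ) (A₁ A₂ : Set E) : Prop where
  lt : m < t
  apply_lt : ∀ z ∈ A₁, ℓ z < m
  le_apply : ∀ z ∈ A₂, z ∉ A₁ → t ≤ ℓ z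

namespace SlabSeparates

variable {t : ℝ} {A₁ A₂ : Set E}

theorem pushDown_notMem_union (h : SlabSeparates ℓ m t A₁ A₂) (hc : ℓ c = 1) (hs : s ∈ Icc 0 1)
    (hx : x ∉ A₁ ∪ A₂) (hxt : ℓ x < t) : pushDown ℓ c m s x ∉ A₁ ∪ A₂ := by
  refine pushDown_notMem hc hs (fun z hz ↦ ?_) hx
  by_cases hz₁ : z ∈ A₁
  · exact .inl (h.apply_lt z hz₁)
  · exact .inr (hxt.trans_le (h.le_apply z (hz.resolve_left hz₁) hz₁))

theorem pushDown_notMem_left (h : SlabSeparates ℓ m t A₁ A₂) (hc : ℓ c = 1) (hs : s ∈ Icc 0 1)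
    (hx : x ∉ A₁) : pushDown ℓ c m s x ∉ A₁ :=
  pushDown_notMem hc hs (fun z hz ↦ .inl (h.apply_lt z hz)) hx

theorem pushDown_one_notMem_union (h : SlabSeparates ℓ m t A₁ A₂) (hc : ℓ c = 1) (hx : x ∉ A₁) :
    pushDown ℓ c m 1 x ∉ A₁ ∪ A₂ := by
  have notMem_left := h.pushDown_notMem_left hc ⟨zero_le_one, le_rfl⟩ hx
  rintro (hz | hz)
  · exact notMem_left hz
  · have := h.le_apply _ hz notMem_left
    rw [apply_pushDown_one hc] at this
    exact (this.trans (min_le_right _ _)).not_gt h.lt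

theorem pushUp_notMem_union (h : SlabSeparates ℓ m t A₁ A₂) (hc : ℓ c = 1) (hx : x ∉ A₂) :
    pushDown (-ℓ) (-c) (-m) 1 x ∉ A₁ ∪ A₂ := by
  have notMem_left : pushDown (-ℓ) (-c) (-m) 1 x ∉ A₁ := fun hz ↦
    (h.apply_lt _ hz).not_ge ((apply_pushUp_one hc).symm ▸ le_max_right _ _)
  rintro (hz | hz)
  · exact notMem_left hz
  rcases le_total m (ℓ x) with hmx | hxm
  · rw [pushDown_of_le (by simpa)] at hz
    exact hx hz
  · have := h.le_apply _ hz notMem_left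
    rw [apply_pushUp_one hc, max_eq_right hxm] at this
    exact this.not_gt h.lt

variable [IsTopologicalAddGroup E] [ContinuousSMul ℝ E]

/-- Pushing everything down to height at most `m`, as a map from the complement of `A₁` to the
complement of `A₁ ∪ A₂`. -/
def pushDownMap (h : SlabSeparates ℓ m t A₁ A₂) (hc : ℓ c = 1) : C(↥A₁ᶜ, ↥(A₁ ∪ A₂)ᶜ) where
  toFun x := ⟨pushDown ℓ c m 1 x, h.pushDown_one_notMem_union hc x.2⟩
  continuous_toFun := ((continuous_pushDown ℓ c m).comp
    (continuous_const.prodMk continuous_subtype_val)).subtype_mk _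

theorem complUnionInclusion_comp_pushDownMap_homotopic (h : SlabSeparates ℓ m t A₁ A₂)
    (hc : ℓ c = 1) :
    ((complUnionInclusion A₁ A₂).comp (h.pushDownMap hc)).Homotopic (.id ↥A₁ᶜ) :=
  .symm ⟨{
    toFun p := ⟨pushDown ℓ c m p.1 p.2, h.pushDown_notMem_left hc p.1.2 p.2.2⟩
    continuous_toFun := ((continuous_pushDown ℓ c m).comp
      (continuous_subtype_val.prodMap continuous_subtype_val)).subtype_mk _
    map_zero_left _ := Subtype.ext pushDown_zero
    map_one_left _ := rfl }⟩

/-- The straight-line homotopy from the identity to `pushDownMap`, on the part of the complement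
below the top of the slab. -/
def pushDownHomotopy (h : SlabSeparates ℓ m t A₁ A₂) (hc : ℓ c = 1) :
    ((ContinuousMap.id ↥(A₁ ∪ A₂)ᶜ).restrict {x | ℓ x.1 < t}).Homotopy
      (((h.pushDownMap hc).comp (complUnionInclusion A₁ A₂)).restrict {x | ℓ x.1 < t}) where
  toFun p := ⟨pushDown ℓ c m p.1 p.2, h.pushDown_notMem_union hc p.1.2 p.2.1.2 p.2.2⟩
  continuous_toFun := ((continuous_pushDown ℓ c m).comp (continuous_subtype_val.prodMap
    (continuous_subtype_val.comp continuous_subtype_val))).subtype_mk _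
  map_zero_left _ := Subtype.ext pushDown_zero
  map_one_left _ := rfl

theorem simplyConnectedSpace_setOf_le (h : SlabSeparates ℓ m t A₁ A₂) (hc : ℓ c = 1)
    [SimplyConnectedSpace ↥A₂ᶜ] : SimplyConnectedSpace {x : ↥(A₁ ∪ A₂)ᶜ | m ≤ ℓ x} := by
  let incl : C({x : ↥(A₁ ∪ A₂)ᶜ | m ≤ ℓ x}, ↥A₂ᶜ) :=
    (ContinuousMap.inclusion (compl_subset_compl.2 subset_union_right)).restrict _
  let pushUp : C(↥A₂ᶜ, {x : ↥(A₁ ∪ A₂)ᶜ | m ≤ ℓ x}) :=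
    { toFun x := ⟨⟨pushDown (-ℓ) (-c) (-m) 1 x, h.pushUp_notMem_union hc x.2⟩,
        (le_max_right _ _).trans_eq (apply_pushUp_one hc).symm⟩
      continuous_toFun := (((continuous_pushDown (-ℓ) (-c) (-m)).comp
        (continuous_const.prodMk continuous_subtype_val)).subtype_mk _).subtype_mk _ }
  refine simplyConnectedSpace_of_leftInverse (i := incl) (r := pushUp) fun x ↦ ?_
  exact Subtype.ext (Subtype.ext (pushDown_of_le (neg_le_neg x.2)))

theorem isEquivalence_map_complUnionInclusion (h : SlabSeparates ℓ m t A₁ A₂) (hc : ℓ c = 1)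
    [SimplyConnectedSpace ↥A₂ᶜ] :
    (FundamentalGroupoid.map (complUnionInclusion A₁ A₂)).IsEquivalence := by
  have := h.simplyConnectedSpace_setOf_le hc
  let U : Set ↥(A₁ ∪ A₂)ᶜ := {x | ℓ x < t}
  let V : Set ↥(A₁ ∪ A₂)ᶜ := {x | m ≤ ℓ x}
  have continuous_height : Continuous fun x : ↥(A₁ ∪ A₂)ᶜ ↦ ℓ x :=
    ℓ.continuous.comp continuous_subtype_val
  have cover : interior U ∪ interior V = univ := by
    refine univ_subset_iff.1 fun x _ ↦ (lt_or_ge (ℓ x) t).imp (fun hx ↦ ?_) fun hx ↦ ?_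
    · exact (isOpen_lt continuous_height continuous_const).subset_interior_iff.2 subset_rfl hx
    · exact (isOpen_lt continuous_const continuous_height).subset_interior_iff.2
        (fun y (hy : m < ℓ y) ↦ hy.le) (h.lt.trans_le hx)
  obtain ⟨α⟩ := nonempty_natTrans_id_map_of_homotopy_of_simplyConnected (V := V)
    (h.pushDownHomotopy hc) (fun s x hx ↦ le_apply_pushDown hc s.2.2 hx)
    (fun x hx ↦ le_apply_pushDown hc le_rfl hx) cover
  exact isEquivalence_map_of_natTrans_of_homotopic _ _ α
    (h.complUnionInclusion_comp_pushDownMap_homotopic hc)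

end SlabSeparates

end PushDown

section Inversion

open EuclideanGeometry
open scoped RealInnerProductSpace

section InversionHomeomorph

variable {V P : Type*} [NormedAddCommGroup V] [InnerProductSpace ℝ V] [MetricSpace P]
  [NormedAddTorsor V P] {o : P} {R : ℝ} {C : Set P}

/-- Inversion in a sphere with centre in `C`, as a homeomorphism between the complements of `C` and
of its preimage. Since `inversion` fixes the centre by convention, the preimage contains it too. -/
def inversionHomeomorph (hR : R ≠ 0) (ho : o ∈ C) : ↥Cᶜ ≃ₜ ↥(inversion o R ⁻¹' C)ᶜ where
  toFun x := ⟨inversion o R x.1, by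
    rw [mem_compl_iff, mem_preimage, inversion_inversion o hR]
    exact x.2⟩
  invFun y := ⟨inversion o R y.1, y.2⟩
  left_inv x := Subtype.ext (inversion_inversion o hR x.1)
  right_inv y := Subtype.ext (inversion_inversion o hR y.1)
  continuous_toFun := by
    refine (Continuous.inversion continuous_const continuous_const continuous_subtype_val ?_)
      |>.subtype_mk _
    exact fun x h ↦ x.2 (h ▸ ho)
  continuous_invFun := by
    refine (Continuous.inversion continuous_const continuous_const continuous_subtype_val ?_)
      |>.subtype_mk _
    exact fun y h ↦ y.2 (by rwa [mem_preimage, h, inversion_self])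

end InversionHomeomorph

variable {E : Type*} [NormedAddCommGroup E] [InnerProductSpace ℝ E]

theorem mem_closedBall_norm_iff {c x : E} : x ∈ closedBall c ‖c‖ ↔ ‖x‖ ^ 2 ≤ 2 * ⟪c, x⟫ := by
  rw [mem_closedBall, dist_eq_norm, ← sq_le_sq₀ (norm_nonneg _) (norm_nonneg _), norm_sub_sq_real,
    real_inner_comm]
  constructor <;> intro h <;> linarith

theorem inner_nonpos_of_mem_closedBall_neg {c x : E} (hx : x ∈ closedBall (-c) ‖c‖) :
    ⟪c, x⟫ ≤ 0 := by
  rw [← norm_neg, mem_closedBall_norm_iff, inner_neg_left] at hx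
  linarith [sq_nonneg ‖x‖]

theorem inversion_zero_one (y : E) : inversion (0 : E) 1 y = (‖y‖ ^ 2)⁻¹ • y := by
  simp [inversion]

theorem inner_inversion_nonpos_iff {c y : E} :
    ⟪c, inversion (0 : E) 1 y⟫ ≤ 0 ↔ ⟪c, y⟫ ≤ 0 := by
  rcases eq_or_ne y 0 with rfl | hy
  · simp
  · rw [inversion_zero_one, inner_smul_right, ← smul_eq_mul,
      smul_nonpos_iff_nonpos_of_pos_left (by positivity)]

theorem inversion_mem_closedBall_norm_iff {c y : E} (hy : y ≠ 0) :
    inversion (0 : E) 1 y ∈ closedBall c ‖c‖ ↔ 1 / 2 ≤ ⟪c, y⟫ := by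
  have norm_sq_smul : ‖(‖y‖ ^ 2)⁻¹ • y‖ ^ 2 = (‖y‖ ^ 2)⁻¹ * 1 := by
    rw [norm_smul, norm_inv, norm_pow, norm_norm]
    field_simp
  rw [mem_closedBall_norm_iff, inversion_zero_one, norm_sq_smul, inner_smul_right, mul_left_comm,
    mul_le_mul_iff_right₀ (by positivity), div_le_iff₀' two_pos]

theorem slabSeparates_preimage_inversion {C₁ C₂ : Set E} {c : E}
    (hC₁ : ∀ x ∈ C₁, ⟪c, x⟫ ≤ 0) (hC₂ : C₂ ⊆ closedBall c ‖c‖) (h₀ : (0 : E) ∈ C₁) :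
    SlabSeparates (innerSL ℝ c) (1 / 4) (1 / 2) (inversion 0 1 ⁻¹' C₁) (inversion 0 1 ⁻¹' C₂) where
  lt := by norm_num
  apply_lt z hz := (inner_inversion_nonpos_iff.1 (hC₁ _ hz)).trans_lt (by norm_num)
  le_apply z hz hz₁ := (inversion_mem_closedBall_norm_iff
    (by rintro rfl; exact hz₁ (by simpa using h₀))).1 (hC₂ hz)

theorem stmt_1_general {C₁ C₂ : Set E} {c : E} (hc : c ≠ 0)
    (hC₁ : ∀ x ∈ C₁, ⟪c, x⟫ ≤ 0) (hC₂ : C₂ ⊆ closedBall c ‖c‖)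
    (h₀ : (0 : E) ∈ C₁ ∩ C₂) [SimplyConnectedSpace ↥C₂ᶜ] :
    (FundamentalGroupoid.map (complUnionInclusion C₁ C₂)).IsEquivalence := by
  let I : Set E → Set E := preimage (inversion 0 1)
  let e₁ : ↥C₁ᶜ ≃ₜ ↥(I C₁)ᶜ := inversionHomeomorph one_ne_zero h₀.1
  let e : ↥(C₁ ∪ C₂)ᶜ ≃ₜ ↥(I C₁ ∪ I C₂)ᶜ := inversionHomeomorph one_ne_zero (mem_union_left C₂ h₀.1)
  have : SimplyConnectedSpace ↥(I C₂)ᶜ :=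
    (inversionHomeomorph one_ne_zero h₀.2).toHomotopyEquiv.simplyConnectedSpace_iff.1 ‹_›
  have : (FundamentalGroupoid.map (complUnionInclusion (I C₁) (I C₂))).IsEquivalence :=
    (slabSeparates_preimage_inversion hC₁ hC₂ h₀.1).isEquivalence_map_complUnionInclusion
      (c := (‖c‖ ^ 2)⁻¹ • c) (by simp [hc])
  have conj : complUnionInclusion C₁ C₂ =
      ((e₁.symm : C(↥(I C₁)ᶜ, ↥C₁ᶜ)).comp (complUnionInclusion (I C₁) (I C₂))).comp
        (e : C(↥(C₁ ∪ C₂)ᶜ, ↥(I C₁ ∪ I C₂)ᶜ)) :=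
    ContinuousMap.ext fun x ↦ Subtype.ext (inversion_inversion 0 one_ne_zero x.1).symm
  rw [conj, FundamentalGroupoid.map_comp, FundamentalGroupoid.map_comp]
  have := isEquivalence_map_homeomorph e
  have := isEquivalence_map_homeomorph e₁.symm
  infer_instance

end Inversion

theorem norm_pt_one_zero_zero : ‖pt 1 0 0‖ = 1 := by
  simp [pt, EuclideanSpace.norm_eq, Fin.sum_univ_three]

theorem pt_neg_one_zero_zero : pt (-1) 0 0 = -pt 1 0 0 := by
  ext i; fin_cases i <;> simp [pt]

theorem pt_zero_zero_zero : pt 0 0 0 = 0 := by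
  ext i; fin_cases i <;> simp [pt]

/-- Wedge of Cantor sets at a tangency point of two balls: if the second Cantor set has
simply connected complement, then the fundamental group of the complement of the wedge is
isomorphic to the fundamental group of the complement of the first Cantor set. -/
theorem stmt_1 (C₁ C₂ : Set R3)
    (h₁ : IsCantorSubset C₁) (h₂ : IsCantorSubset C₂)
    (hB₁ : C₁ ⊆ closedBall (pt (-1) 0 0) 1)
    (hB₂ : C₂ ⊆ closedBall (pt 1 0 0) 1)
    (hmeet : C₁ ∩ C₂ = {pt 0 0 0})
    (hsc : SimplyConnectedSpace ↥(C₂ᶜ)) :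
    ∀ (hb : pt 0 0 5 ∈ (C₁ ∪ C₂)ᶜ) (hb' : pt 0 0 5 ∈ C₁ᶜ),
      Nonempty (FundamentalGroup ↥((C₁ ∪ C₂)ᶜ) ⟨pt 0 0 5, hb⟩ ≃*
        FundamentalGroup ↥(C₁ᶜ) ⟨pt 0 0 5, hb'⟩) := by
  intro hb _
  have hc : pt 1 0 0 ≠ 0 := norm_ne_zero_iff.1 (norm_pt_one_zero_zero.trans_ne one_ne_zero)
  have hC₁ : ∀ x ∈ C₁, inner ℝ (pt 1 0 0) x ≤ 0 := fun x hx ↦ inner_nonpos_of_mem_closedBall_neg <|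
    by simpa only [norm_pt_one_zero_zero, pt_neg_one_zero_zero] using hB₁ hx
  have hC₂ : C₂ ⊆ closedBall (pt 1 0 0) ‖pt 1 0 0‖ := norm_pt_one_zero_zero.symm ▸ hB₂
  have h₀ : (0 : R3) ∈ C₁ ∩ C₂ := hmeet.ge pt_zero_zero_zero.symm
  have := stmt_1_general hc hC₁ hC₂ h₀
  let F := FundamentalGroupoid.map (complUnionInclusion C₁ C₂)
  exact ⟨(Functor.FullyFaithful.ofFullyFaithful F).mulEquivEnd (mk ⟨pt 0 0 5, hb⟩)⟩
end
end

section
/- Let C₁ and C₂ be Cantor sets in ℝ³ contained in disjoint closed balls B₁ and B₂ respectively, and let C = C₁ ∪ C₂. Then the fundamental group of ℝ³ \ C is isomorphic to the free product of the fundamental group of ℝ³ \ C₁ and the fundamental group of ℝ³ \ C₂ (basepoints taken in the respective complements, which are path-connected). -/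
open Metric Set

noncomputable section

/-!
Call a function from paths to a group a cocycle if it is homotopy invariant and turns concatenation
into products. A function that is a cocycle near every point corrects, without changing it on the
small pieces, to a cocycle: its pullback along a path or a homotopy lives on the compact convex set
`I` or `I × I`, where local increments have a primitive, obtained by coning off from a base point.
Thus cocycles on two open sets that agree on the intersection glue.

If the intersection is simply connected, gluing the two tautological cocycles with values in the
free product inverts the canonical map from the free product, which is van Kampen's theorem. With
coefficients in `ℤ`, gluing shows that two disjoint closed subsets of a convex open set separate no
pair of points that neither of them separates; hence, writing a totally disconnected compact set as
a finite union of disjoint small pieces, such a set does not separate a convex open set of dimension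
at least two.

For two such sets separated by a hyperplane, take overlapping open half-spaces `P` and `Q`, each
missing one of the sets. Van Kampen's theorem applies to `P \ K` and `Q \ L`, whose intersection is
the convex set `P ∩ Q`, and again to `P \ K` and `Q`, which shows that `P \ K` has the fundamental
group of the complement of `K`.
-/

namespace VanKampen

open unitInterval Topology
open ContinuousMap (inclusion)

section Cocycle

variable {X Y G : Type*} [TopologicalSpace X] [TopologicalSpace Y] [Group G]

/-- The pullback along `f` of a group-valued function of paths. Paths are taken as elements of
`C(I, X)`, so that no transport along equalities of endpoints is needed. -/
def pathComap (F : C(I, X) → G) (f : C(Y, X)) : C(I, Y) → G := fun γ => F (f.comp γ)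

/-- The restriction of a group-valued function of paths to the paths lying in `S`. -/
abbrev pathRestrict (F : C(I, X) → G) (S : Set X) : C(I, S) → G :=
  pathComap F ⟨Subtype.val, continuous_subtype_val⟩

/-- A path cocycle: a homotopy invariant group-valued function of paths that turns concatenation
into products. The order of the factors is the one of the multiplication of `FundamentalGroup`. -/
structure IsCocycle (F : C(I, X) → G) : Prop where
  trans : ∀ {a b c : X} (p : Path a b) (q : Path b c), F (p.trans q) = F q * F p
  homotopic : ∀ {a b : X} {p q : Path a b}, p.Homotopic q → F p = F q

/-- A primitive on `S` of a function of paths: its values are the increments of `k` along the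
paths lying in `S`. -/
def IsPrimitiveOn (F : C(I, X) → G) (k : X → G) (S : Set X) : Prop :=
  ∀ γ : C(I, X), (∀ t, γ t ∈ S) → k (γ 1) = F γ * k (γ 0)

/-- A function of paths that is a cocycle on a neighbourhood of every point. -/
def IsLocalCocycle (F : C(I, X) → G) : Prop := ∀ x, ∃ U ∈ 𝓝 x, IsCocycle (pathRestrict F U)

/-- A function that is a primitive on a neighbourhood of every point. -/
def IsLocalPrimitive (F : C(I, X) → G) (k : X → G) : Prop := ∀ x, ∃ U ∈ 𝓝 x, IsPrimitiveOn F k U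

variable {F : C(I, X) → G} {k k' : X → G} {S T : Set X}

theorem IsCocycle.comap (hF : IsCocycle F) (f : C(Y, X)) : IsCocycle (pathComap F f) where
  trans p q := by
    have := hF.trans (p.map f.continuous) (q.map f.continuous)
    rwa [← Path.map_trans] at this
  homotopic h := hF.homotopic (h.map f)

theorem IsCocycle.restrict_mono (hF : IsCocycle (pathRestrict F T)) (h : S ⊆ T) :
    IsCocycle (pathRestrict F S) :=
  hF.comap (inclusion h)

theorem IsCocycle.apply_refl (hF : IsCocycle F) (a : X) : F (Path.refl a) = 1 := by
  have := hF.trans (Path.refl a) (Path.refl a)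
  rw [Path.refl_trans_refl] at this
  simpa using this

theorem IsCocycle.exists_primitive [SimplyConnectedSpace X] (hF : IsCocycle F) :
    ∃ k, IsPrimitiveOn F k univ := by
  obtain ⟨x₀⟩ : Nonempty X := inferInstance
  let τ (x : X) : Path x₀ x := PathConnectedSpace.somePath x₀ x
  refine ⟨fun x => F (τ x), fun γ _ => ?_⟩
  have h := hF.trans (τ (γ 0)) ⟨γ, rfl, rfl⟩
  exact (hF.homotopic (SimplyConnectedSpace.paths_homotopic _ _)).trans h

theorem IsPrimitiveOn.comap (hk : IsPrimitiveOn F k S) (f : C(Y, X)) :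
    IsPrimitiveOn (pathComap F f) (k ∘ f) (f ⁻¹' S) :=
  fun γ hγ => hk (f.comp γ) hγ

theorem IsCocycle.exists_isPrimitiveOn (hS : IsSimplyConnected S)
    (hF : IsCocycle (pathRestrict F S)) : ∃ k, IsPrimitiveOn F k S := by
  classical
  have : SimplyConnectedSpace S := hS
  obtain ⟨k, hk⟩ := hF.exists_primitive
  refine ⟨fun x => if h : x ∈ S then k ⟨x, h⟩ else 1, fun γ hγ => ?_⟩
  simp only [hγ, ↓reduceDIte]
  exact hk ⟨fun t => ⟨γ t, hγ t⟩, by fun_prop⟩ fun _ => mem_univ _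

theorem IsPrimitiveOn.isLocalPrimitive (hk : IsPrimitiveOn F k univ) : IsLocalPrimitive F k :=
  fun _ => ⟨univ, Filter.univ_mem, hk⟩

theorem IsLocalPrimitive.comap (hk : IsLocalPrimitive F k) (f : C(Y, X)) :
    IsLocalPrimitive (pathComap F f) (k ∘ f) := fun y =>
  let ⟨U, hU, hkU⟩ := hk (f y)
  ⟨f ⁻¹' U, f.continuous.continuousAt hU, hkU.comap f⟩

theorem IsLocalCocycle.comap (hF : IsLocalCocycle F) (f : C(Y, X)) :
    IsLocalCocycle (pathComap F f) := fun y =>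
  let ⟨U, hU, hFU⟩ := hF (f y)
  ⟨f ⁻¹' U, f.continuous.continuousAt hU,
    IsCocycle.comap hFU ⟨U.restrictPreimage f, f.continuous.restrictPreimage⟩⟩

theorem IsLocalPrimitive.mul_inv_eq [LocallyPathConnectedSpace X] [PreconnectedSpace X]
    (hk : IsLocalPrimitive F k) (hk' : IsLocalPrimitive F k') (x y : X) :
    k y * (k x)⁻¹ = k' y * (k' x)⁻¹ := by
  have hconst : IsLocallyConstant fun z => (k z)⁻¹ * k' z := by
    refine (IsLocallyConstant.iff_eventually_eq _).2 fun z => ?_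
    obtain ⟨U, hU, hkU⟩ := hk z
    obtain ⟨U', hU', hkU'⟩ := hk' z
    obtain ⟨W, ⟨hW, hWc⟩, hWU⟩ :=
      (path_connected_basis z).mem_iff.1 (Filter.inter_mem hU hU')
    filter_upwards [hW] with w hw
    obtain ⟨γ, hγ⟩ := hWc.joinedIn z (mem_of_mem_nhds hW) w hw
    have h := hkU γ fun t => (hWU (hγ t)).1
    have h' := hkU' γ fun t => (hWU (hγ t)).2
    simp only [ContinuousMap.coe_coe, Path.source, Path.target] at h h'
    rw [h, h']
    group
  rw [inv_mul_eq_iff_eq_mul.1 (hconst.apply_eq_of_preconnectedSpace y x)]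
  group

end Cocycle

section Existence

variable {E G : Type*} [NormedAddCommGroup E] [NormedSpace ℝ E] [Group G]

instance : LocallyPathConnectedSpace I := (convex_Icc 0 1).locallyPathConnectedSpace

instance : SimplyConnectedSpace I :=
  have := (convex_Icc (0 : ℝ) 1).contractibleSpace ⟨0, left_mem_Icc.2 zero_le_one⟩
  .ofContractible I

theorem isSimplyConnected_of_convex {S : Set E} (hS : Convex ℝ S) (hne : S.Nonempty) :
    IsSimplyConnected S :=
  have := hS.contractibleSpace hne
  SimplyConnectedSpace.ofContractible S

/-- The product of the increments `c` along the first `n` steps of the sequence `u`. -/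
def stepProduct {M α : Type*} [Monoid M] (c : α → α → M) (u : ℕ → α) : ℕ → M
  | 0 => 1
  | n + 1 => c (u n) (u (n + 1)) * stepProduct c u n

theorem stepProduct_mul_eq {M α : Type*} [Monoid M] {c : α → α → M} {u v : ℕ → α} {n : ℕ}
    (h : ∀ j < n, c (v j) (v (j + 1)) * c (u j) (v j) =
      c (u (j + 1)) (v (j + 1)) * c (u j) (u (j + 1))) :
    stepProduct c v n * c (u 0) (v 0) = c (u n) (v n) * stepProduct c u n := by
  induction n with
  | zero => simp [stepProduct]
  | succ n ih =>
    rw [stepProduct, mul_assoc, ih fun j hj => h j (hj.trans n.lt_succ_self), ← mul_assoc,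
      h n n.lt_succ_self, mul_assoc, stepProduct]

theorem dist_lineMap_step (x₀ x : E) {n j : ℕ} :
    dist (AffineMap.lineMap x₀ x (j / n : ℝ) : E) (AffineMap.lineMap x₀ x ((j + 1 : ℕ) / n : ℝ)) =
      dist x₀ x / n := by
  rw [dist_lineMap_lineMap, Real.dist_eq, abs_sub_comm, ← sub_div, Nat.cast_succ,
    add_sub_cancel_left, abs_of_nonneg (by positivity)]
  ring

theorem dist_lineMap_le (x₀ x y : E) {s : ℝ} (hs : s ∈ Icc (0 : ℝ) 1) :
    dist (AffineMap.lineMap x₀ x s : E) (AffineMap.lineMap x₀ y s) ≤ dist x y := by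
  rw [dist_eq_norm, AffineMap.lineMap_apply_module, AffineMap.lineMap_apply_module,
    add_sub_add_left_eq_sub, ← smul_sub, norm_smul, ← dist_eq_norm, Real.norm_of_nonneg hs.1]
  exact mul_le_of_le_one_left dist_nonneg hs.2

theorem increments_commute {M : Type*} [PseudoMetricSpace M] {δ : ℝ} {c : M → M → G}
    {w x y z : M}
    (hc : ∀ x ∈ ball w δ, ∀ y ∈ ball w δ, ∀ z ∈ ball w δ, c x z = c y z * c x y)
    (hwx : dist w x < δ / 2) (hwy : dist w y < δ / 2) (hyz : dist y z < δ / 2) :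
    c y z * c w y = c x z * c w x := by
  have hδ : 0 < δ := by linarith [dist_nonneg.trans_lt hwx]
  have hw : w ∈ ball w δ := mem_ball_self hδ
  have hx : x ∈ ball w δ := by
    rw [mem_ball']
    linarith
  have hy : y ∈ ball w δ := by
    rw [mem_ball']
    linarith
  have hz : z ∈ ball w δ := by
    rw [mem_ball']
    linarith [dist_triangle w y z]
  rw [← hc w hw y hy z hz, hc w hw x hx z hz]

/-- Cone off from a base point: `k x` is the product of the increments along the segment from that
point to `x`. -/
theorem exists_coboundary_of_local_cocycle {C : Set E} (hC : Convex ℝ C)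
    (hb : Bornology.IsBounded C) {δ : ℝ} (hδ : 0 < δ) {c : E → E → G}
    (hc : ∀ w ∈ C, ∀ x ∈ ball w δ, ∀ y ∈ ball w δ, ∀ z ∈ ball w δ, c x z = c y z * c x y) :
    ∃ k : E → G, ∀ x ∈ C, ∀ y ∈ C, dist x y < δ / 2 → k y = c x y * k x := by
  obtain rfl | ⟨x₀, hx₀⟩ := C.eq_empty_or_nonempty
  · exact ⟨1, by simp⟩
  obtain ⟨D, hD⟩ := hb.subset_ball x₀
  obtain ⟨n, hn⟩ := exists_nat_gt (2 * D / δ)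
  have hD₀ : 0 < D := by simpa using hD hx₀
  have hn₀ : (0 : ℝ) < n := lt_trans (by positivity) hn
  let u (x : E) (j : ℕ) : E := AffineMap.lineMap x₀ x (j / n : ℝ)
  have hu {x : E} (hx : x ∈ C) {j : ℕ} (hj : j ≤ n) : u x j ∈ C :=
    hC.lineMap_mem hx₀ hx ⟨by positivity, div_le_one_of_le₀ (mod_cast hj) n.cast_nonneg⟩
  have hstep {x : E} (hx : x ∈ C) (j : ℕ) : dist (u x j) (u x (j + 1)) < δ / 2 := by
    rw [dist_lineMap_step, div_lt_iff₀ hn₀, dist_comm]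
    calc dist x x₀ < D := hD hx
      _ < δ / 2 * n := by
        rw [div_lt_iff₀ hδ] at hn
        linarith
  have hu₀ (x : E) : u x 0 = x₀ := by simp [u]
  have hun (x : E) : u x n = x := by simp [u, hn₀.ne']
  have hself : c x₀ x₀ = 1 := by
    simpa using hc x₀ hx₀ x₀ (mem_ball_self hδ) x₀ (mem_ball_self hδ) x₀ (mem_ball_self hδ)
  refine ⟨fun x => stepProduct c (u x) n, fun x hx y hy hxy => ?_⟩
  suffices h : ∀ j < n, c (u y j) (u y (j + 1)) * c (u x j) (u y j) =
      c (u x (j + 1)) (u y (j + 1)) * c (u x j) (u x (j + 1)) by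
    simpa only [hu₀, hun, hself, mul_one] using stepProduct_mul_eq h
  intro j hj
  have hxyj : dist (u x j) (u y j) < δ / 2 :=
    (dist_lineMap_le x₀ x y ⟨by positivity, div_le_one_of_le₀ (mod_cast hj.le) hn₀.le⟩).trans_lt
      hxy
  exact increments_commute (hc _ (hu hx hj.le)) (hstep hx j) hxyj (hstep hy j)

theorem IsLocalCocycle.exists_isPrimitiveOn_nhds {F : C(I, E) → G} (hF : IsLocalCocycle F)
    {C : Set E} (hC : Convex ℝ C) (hCc : IsCompact C) :
    ∃ k : E → G, ∀ x ∈ C, ∃ U ∈ 𝓝 x, IsPrimitiveOn F k (U ∩ C) := by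
  choose U hU hFU using hF
  obtain ⟨δ, hδ, hball⟩ := lebesgue_number_lemma_of_metric hCc
    (fun x : E => isOpen_interior (s := U x))
    fun x _ => mem_iUnion.2 ⟨x, mem_interior_iff_mem_nhds.2 (hU x)⟩
  let c (x y : E) : G := F (Path.segment x y)
  have hprim : ∀ w ∈ C, ∃ k, IsPrimitiveOn F k (ball w δ) := fun w hw =>
    let ⟨x, hx⟩ := hball w hw
    ((hFU x).restrict_mono (hx.trans interior_subset)).exists_isPrimitiveOn
      (isSimplyConnected_of_convex (convex_ball w δ) (nonempty_ball.2 hδ))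
  have hc {w : E} {k : E → G} (hk : IsPrimitiveOn F k (ball w δ)) {x y : E} (hx : x ∈ ball w δ)
      (hy : y ∈ ball w δ) : c x y = k y * (k x)⁻¹ := by
    rw [eq_mul_inv_iff_mul_eq]
    have hseg (t : I) : Path.segment x y t ∈ ball w δ :=
      (convex_ball w δ).lineMap_mem hx hy t.2
    simpa [c] using (hk (Path.segment x y) hseg).symm
  obtain ⟨k, hk⟩ := exists_coboundary_of_local_cocycle hC hCc.isBounded hδ (c := c)
    fun w hw x hx y hy z hz => by
      obtain ⟨κ, hκ⟩ := hprim w hw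
      rw [hc hκ hx hz, hc hκ hy hz, hc hκ hx hy]
      group
  refine ⟨k, fun w hw => ⟨ball w (δ / 4), ball_mem_nhds w (by positivity), fun γ hγ => ?_⟩⟩
  obtain ⟨κ, hκ⟩ := hprim w hw
  have hγδ (t : I) : γ t ∈ ball w δ := ball_subset_ball (by linarith) (hγ t).1
  have hdist : dist (γ 0) (γ 1) < δ / 2 := by
    linarith [dist_triangle_right (γ 0) (γ 1) w, mem_ball.1 (hγ 0).1, mem_ball.1 (hγ 1).1]
  rw [hk _ (hγ 0).2 _ (hγ 1).2 hdist, hc hκ (hγδ 0) (hγδ 1), hκ γ hγδ, mul_inv_cancel_right]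

theorem IsLocalCocycle.exists_isLocalPrimitive {Y : Type*} [TopologicalSpace Y] [CompactSpace Y]
    {F : C(I, Y) → G} (hF : IsLocalCocycle F) {e : C(Y, E)} {r : C(E, Y)}
    (hre : Function.LeftInverse r e) (he : Convex ℝ (range e)) : ∃ k, IsLocalPrimitive F k := by
  obtain ⟨k, hk⟩ := (hF.comap r).exists_isPrimitiveOn_nhds he (isCompact_range e.continuous)
  refine ⟨k ∘ e, fun y => ?_⟩
  obtain ⟨U, hU, hkU⟩ := hk (e y) (mem_range_self y)
  refine ⟨e ⁻¹' U, e.continuous.continuousAt hU, fun γ hγ => ?_⟩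
  have h := hkU (e.comp γ) fun t => ⟨hγ t, mem_range_self _⟩
  have hγe : r.comp (e.comp γ) = γ := ContinuousMap.ext fun t => hre (γ t)
  rwa [pathComap, hγe] at h

theorem IsLocalCocycle.exists_isLocalPrimitive_interval {F : C(I, I) → G}
    (hF : IsLocalCocycle F) : ∃ k, IsLocalPrimitive F k :=
  hF.exists_isLocalPrimitive (e := ⟨Subtype.val, continuous_subtype_val⟩)
    (r := ⟨projIcc 0 1 zero_le_one, continuous_projIcc⟩) (projIcc_val zero_le_one) <| by
    rw [ContinuousMap.coe_mk, Subtype.range_coe]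
    exact convex_Icc 0 1

theorem IsLocalCocycle.exists_isLocalPrimitive_square {F : C(I, I × I) → G}
    (hF : IsLocalCocycle F) : ∃ k, IsLocalPrimitive F k :=
  hF.exists_isLocalPrimitive (e := ⟨Prod.map Subtype.val Subtype.val, by fun_prop⟩)
    (r := ⟨Prod.map (projIcc 0 1 zero_le_one) (projIcc 0 1 zero_le_one),
      continuous_projIcc.prodMap continuous_projIcc⟩)
    (fun z => Prod.ext (projIcc_val zero_le_one z.1) (projIcc_val zero_le_one z.2)) <| by
    rw [ContinuousMap.coe_mk, range_prodMap, Subtype.range_coe]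
    exact (convex_Icc 0 1).prod (convex_Icc 0 1)

end Existence

section Gluing

variable {X Y G : Type*} [TopologicalSpace X] [TopologicalSpace Y] [Group G]
  {F : C(I, X) → G}

theorem IsPrimitiveOn.apply_eq {f : C(Y, X)} {k : Y → G}
    (hk : IsPrimitiveOn (pathComap F f) k univ) (ρ : C(I, Y)) {γ : C(I, X)}
    (h : ∀ t, f (ρ t) = γ t) : k (ρ 1) = F γ * k (ρ 0) := by
  have hρ := hk ρ fun _ => mem_univ _
  rwa [pathComap, show f.comp ρ = γ from ContinuousMap.ext h] at hρ

theorem IsPrimitiveOn.apply_eq_of_const {f : C(Y, X)} {k : Y → G}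
    (hk : IsPrimitiveOn (pathComap F f) k univ) (ρ : C(I, Y)) {a : X} (h : ∀ t, f (ρ t) = a) :
    k (ρ 1) = k (ρ 0) := by
  have hconst : F (.const I a) = 1 := by
    simpa using hk.apply_eq (.const I (ρ 0)) (γ := .const I a) fun _ => h 0
  simpa [hconst] using hk.apply_eq ρ (γ := .const I a) h

/-- The affine map of `I` onto its left half, where a concatenation runs through its first path. -/
def leftHalf : C(I, I) where
  toFun t := ⟨t / 2, div_mem t.2.1 zero_le_two (by linarith [t.2.2])⟩

/-- The affine map of `I` onto its right half, where a concatenation runs through its second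
path. -/
def rightHalf : C(I, I) where
  toFun t := ⟨(t + 1) / 2, div_mem (by linarith [t.2.1]) zero_le_two (by linarith [t.2.2])⟩

theorem trans_leftHalf {a b c : X} (p : Path a b) (q : Path b c) (t : I) :
    p.trans q (leftHalf t) = p t := by
  have ht : (leftHalf t : ℝ) = t / 2 := rfl
  rw [Path.trans_apply, dif_pos (by linarith [t.2.2])]
  exact congrArg p (Subtype.ext (by linarith))

theorem trans_rightHalf {a b c : X} (p : Path a b) (q : Path b c) (t : I) :
    p.trans q (rightHalf t) = q t := by
  have ht : (rightHalf t : ℝ) = (t + 1) / 2 := rfl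
  obtain rfl | h0 := eq_or_ne t 0
  · rw [Path.trans_apply, dif_pos (by simp [ht]), q.source]
    exact (congrArg p (Subtype.ext (by simp [ht]))).trans p.target
  · have hpos : (0 : ℝ) < t := lt_of_le_of_ne t.2.1 fun h => h0 (Subtype.ext h.symm)
    rw [Path.trans_apply, dif_neg (by linarith)]
    exact congrArg q (Subtype.ext (by linarith))

theorem isCocycle_of_exists_primitive
    (h₁ : ∀ γ : C(I, X), ∃ k, IsPrimitiveOn (pathComap F γ) k univ)
    (h₂ : ∀ f : C(I × I, X), ∃ k, IsPrimitiveOn (pathComap F f) k univ) : IsCocycle F where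
  trans p q := by
    obtain ⟨k, hk⟩ := h₁ (p.trans q)
    have hp := hk.apply_eq leftHalf (γ := p) (trans_leftHalf p q)
    have hq := hk.apply_eq rightHalf (γ := q) (trans_rightHalf p q)
    have h₀ : leftHalf 0 = 0 := by ext; simp [leftHalf]
    have hmid : leftHalf 1 = rightHalf 0 := by ext; simp [leftHalf, rightHalf]
    have h₁ : rightHalf 1 = 1 := by ext; simp [rightHalf]
    rw [h₀, hmid] at hp
    rw [h₁] at hq
    have hpq : k 1 = F (p.trans q) * k 0 := hk.apply_eq (.id I) fun _ => rfl
    rw [← mul_left_inj (k 0), ← hpq, hq, hp, mul_assoc]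
  homotopic := by
    rintro a b p q ⟨H⟩
    obtain ⟨k, hk⟩ := h₂ H.toContinuousMap
    have hp : k (0, 1) = F p * k (0, 0) :=
      hk.apply_eq ⟨fun t => (0, t), by fun_prop⟩ (γ := p) H.apply_zero
    have hq : k (1, 1) = F q * k (1, 0) :=
      hk.apply_eq ⟨fun t => (1, t), by fun_prop⟩ (γ := q) H.apply_one
    have hsource : k (1, 0) = k (0, 0) :=
      hk.apply_eq_of_const ⟨fun s => (s, 0), by fun_prop⟩ H.source
    have htarget : k (1, 1) = k (0, 1) :=
      hk.apply_eq_of_const ⟨fun s => (s, 1), by fun_prop⟩ H.target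
    rw [← mul_left_inj (k (0, 0)), ← hp, ← htarget, hq, hsource]

theorem IsLocalCocycle.exists_isCocycle (hF : IsLocalCocycle F) :
    ∃ F' : C(I, X) → G, IsCocycle F' ∧
      ∀ S, IsCocycle (pathRestrict F S) → pathRestrict F' S = pathRestrict F S := by
  choose k hk using fun γ : C(I, X) => (hF.comap γ).exists_isLocalPrimitive_interval
  let F' (γ : C(I, X)) : G := k γ 1 * (k γ 0)⁻¹
  have hF' {Y : Type} [TopologicalSpace Y] (f : C(Y, X)) {κ : Y → G}
      (hκ : IsLocalPrimitive (pathComap F f) κ) : IsPrimitiveOn (pathComap F' f) κ univ := by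
    intro ρ _
    have h := (hk (f.comp ρ)).mul_inv_eq (hκ.comap ρ) 0 1
    rw [← mul_inv_eq_iff_eq_mul]
    exact h.symm
  refine ⟨F', isCocycle_of_exists_primitive (fun γ => ⟨_, hF' γ (hk γ)⟩) fun f => ?_, ?_⟩
  · obtain ⟨κ, hκ⟩ := (hF.comap f).exists_isLocalPrimitive_square
    exact ⟨κ, hF' f hκ⟩
  · intro S hS
    ext γ
    obtain ⟨κ, hκ⟩ := (hS.comap γ).exists_primitive
    have h := hκ (.id I) fun _ => mem_univ _
    have h' := hF' (.comp ⟨Subtype.val, continuous_subtype_val⟩ γ) hκ.isLocalPrimitive (.id I)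
      fun _ => mem_univ _
    exact mul_right_cancel (h'.symm.trans h)

end Gluing

section Union

variable {X G H : Type*} [TopologicalSpace X] [Group G] [Group H] {U V : Set X}

/-- A path lying in `S`, as a path of the subspace `S`. -/
def restrictPath {S : Set X} {a b : X} (p : Path a b) (hp : ∀ t, p t ∈ S) :
    Path (⟨a, p.source ▸ hp 0⟩ : S) ⟨b, p.target ▸ hp 1⟩ where
  toFun t := ⟨p t, hp t⟩
  source' := Subtype.ext p.source
  target' := Subtype.ext p.target

theorem IsCocycle.monoidHom_comp {F : C(I, X) → G} (hF : IsCocycle F) (φ : G →* H) :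
    IsCocycle (φ ∘ F) where
  trans p q := by simp only [Function.comp_apply, hF.trans p q, map_mul]
  homotopic h := congrArg φ (hF.homotopic h)

theorem isCocycle_coboundary (f : X → G) : IsCocycle fun γ : C(I, X) => f (γ 1) * (f (γ 0))⁻¹ where
  trans p q := by simp
  homotopic := by simp

theorem IsCocycle.ext {F F' : C(I, X) → G} (hF : IsCocycle F) (hF' : IsCocycle F')
    (h : ∀ x, ∃ U ∈ 𝓝 x, pathRestrict F U = pathRestrict F' U) : F = F' := by
  ext γ
  obtain ⟨k, hk⟩ := (hF.comap γ).exists_primitive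
  obtain ⟨k', hk'⟩ := (hF'.comap γ).exists_primitive
  have hlocal : IsLocalPrimitive (pathComap F γ) k' := fun t => by
    obtain ⟨U, hU, hUeq⟩ := h (γ t)
    refine ⟨γ ⁻¹' U, γ.continuous.continuousAt hU, fun ρ hρ => ?_⟩
    have hFF' : F (γ.comp ρ) = F' (γ.comp ρ) :=
      congrFun hUeq ⟨fun s => ⟨γ (ρ s), hρ s⟩, by fun_prop⟩
    rw [pathComap, hFF']
    exact hk' ρ fun _ => mem_univ _
  have hk₁ : k 1 = F γ * k 0 := hk (.id I) fun _ => mem_univ _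
  have hk'₁ : k' 1 = F' γ * k' 0 := hk' (.id I) fun _ => mem_univ _
  have h₁ := hk.isLocalPrimitive.mul_inv_eq hlocal 0 1
  rwa [hk₁, hk'₁, mul_inv_cancel_right, mul_inv_cancel_right] at h₁

theorem IsCocycle.ext_union (hU : IsOpen U) (hV : IsOpen V) {F F' : C(I, ↥(U ∪ V)) → G}
    (hF : IsCocycle F) (hF' : IsCocycle F')
    (hFU : pathComap F (inclusion subset_union_left) =
      pathComap F' (inclusion subset_union_left))
    (hFV : pathComap F (inclusion subset_union_right) =
      pathComap F' (inclusion subset_union_right)) : F = F' := by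
  refine hF.ext hF' fun x => x.2.elim (fun hx => ?_) fun hx => ?_
  · refine ⟨Subtype.val ⁻¹' U, (hU.preimage continuous_subtype_val).mem_nhds hx, ?_⟩
    exact congrArg (pathComap · ⟨U.restrictPreimage Subtype.val, by fun_prop⟩) hFU
  · refine ⟨Subtype.val ⁻¹' V, (hV.preimage continuous_subtype_val).mem_nhds hx, ?_⟩
    exact congrArg (pathComap · ⟨V.restrictPreimage Subtype.val, by fun_prop⟩) hFV

theorem exists_isCocycle_union (hU : IsOpen U) (hV : IsOpen V) {Φ : C(I, U) → G}
    {Ψ : C(I, V) → G} (hΦ : IsCocycle Φ) (hΨ : IsCocycle Ψ)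
    (h : pathComap Φ (inclusion inter_subset_left) =
      pathComap Ψ (inclusion inter_subset_right)) :
    ∃ F : C(I, ↥(U ∪ V)) → G, IsCocycle F ∧ pathComap F (inclusion subset_union_left) = Φ ∧
      pathComap F (inclusion subset_union_right) = Ψ := by
  classical
  let F (γ : C(I, ↥(U ∪ V))) : G :=
    if hγ : ∀ t, (γ t : X) ∈ U then Φ ⟨fun t => ⟨γ t, hγ t⟩, by fun_prop⟩
    else if hγ : ∀ t, (γ t : X) ∈ V then Ψ ⟨fun t => ⟨γ t, hγ t⟩, by fun_prop⟩ else 1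
  have hFU : pathComap F (inclusion subset_union_left) = Φ :=
    funext fun γ => dif_pos fun t => (γ t).2
  have hFV : pathComap F (inclusion subset_union_right) = Ψ := by
    ext γ
    by_cases hγ : ∀ t, (γ t : X) ∈ U
    · exact (dif_pos hγ).trans (congrFun h ⟨fun t => ⟨γ t, hγ t, (γ t).2⟩, by fun_prop⟩)
    · exact (dif_neg hγ).trans (dif_pos fun t => (γ t).2)
  have hFU' : IsCocycle (pathRestrict F (Subtype.val ⁻¹' U)) := by
    rw [← hFU] at hΦ
    exact hΦ.comap ⟨U.restrictPreimage Subtype.val, by fun_prop⟩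
  have hFV' : IsCocycle (pathRestrict F (Subtype.val ⁻¹' V)) := by
    rw [← hFV] at hΨ
    exact hΨ.comap ⟨V.restrictPreimage Subtype.val, by fun_prop⟩
  have hF : IsLocalCocycle F := fun x => x.2.elim
    (fun hx => ⟨_, (hU.preimage continuous_subtype_val).mem_nhds hx, hFU'⟩)
    fun hx => ⟨_, (hV.preimage continuous_subtype_val).mem_nhds hx, hFV'⟩
  obtain ⟨F', hF', hF'F⟩ := hF.exists_isCocycle
  refine ⟨F', hF', ?_, ?_⟩
  · rw [← hFU]
    exact congrArg (pathComap · ⟨fun x : U => ⟨⟨x, Or.inl x.2⟩, x.2⟩, by fun_prop⟩) (hF'F _ hFU')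
  · rw [← hFV]
    exact congrArg (pathComap · ⟨fun x : V => ⟨⟨x, Or.inr x.2⟩, x.2⟩, by fun_prop⟩) (hF'F _ hFV')

theorem joinedIn_inter (hU : IsOpen U) (hV : IsOpen V) (hUV : IsSimplyConnected (U ∪ V)) {x y : X}
    (hxU : JoinedIn U x y) (hxV : JoinedIn V x y) : JoinedIn (U ∩ V) x y := by
  classical
  let f (z : X) : Multiplicative ℤ := if JoinedIn (U ∩ V) x z then 1 else .ofAdd 1
  have hf (γ : C(I, ↥(U ∩ V))) : f (γ 1) = f (γ 0) := by
    have hγ : JoinedIn (U ∩ V) (γ 0) (γ 1) :=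
      ⟨(⟨γ, rfl, rfl⟩ : Path (γ 0) (γ 1)).map continuous_subtype_val, fun t => (γ t).2⟩
    have hiff : JoinedIn (U ∩ V) x (γ 1) ↔ JoinedIn (U ∩ V) x (γ 0) :=
      ⟨fun h => h.trans hγ.symm, fun h => h.trans hγ⟩
    simp only [f, hiff]
  -- The cocycle glued from `1` on `U` and the increments of `f` on `V` takes the same value on the
  -- paths from `x` to `y` in `U` and in `V`, the union being simply connected.
  obtain ⟨F, hF, hFU, hFV⟩ := exists_isCocycle_union hU hV (isCocycle_coboundary 1)
    (isCocycle_coboundary fun z : V => f z)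
    (funext fun γ => (mul_inv_cancel 1).trans (mul_inv_eq_one.2 (hf γ)).symm)
  obtain ⟨p, hp⟩ := hxU
  obtain ⟨q, hq⟩ := hxV
  have : SimplyConnectedSpace ↥(U ∪ V) := hUV
  let p' := restrictPath (S := U ∪ V) p fun t => Or.inl (hp t)
  let q' := restrictPath (S := U ∪ V) q fun t => Or.inr (hq t)
  have hpq : F p' = F q' := hF.homotopic (SimplyConnectedSpace.paths_homotopic p' q')
  have hFp : F p' = 1 := by simpa using! congrFun hFU (restrictPath p hp)
  have hFq : F q' = f y * (f x)⁻¹ := by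
    simpa [restrictPath] using! congrFun hFV (restrictPath q hq)
  have hx : JoinedIn (U ∩ V) x x := .refl ⟨by simpa using hp 0, by simpa using hq 0⟩
  have hfxy : f y = f x := by rw [← mul_inv_eq_one, ← hFq, ← hpq, hFp]
  by_contra hy
  simp only [f, if_pos hx, if_neg hy] at hfxy
  exact absurd hfxy (by decide)

end Union

section FundamentalGroup

open FundamentalGroup Path.Homotopic.Quotient

variable {X Y G : Type*} [TopologicalSpace X] [TopologicalSpace Y] [Group G] {x₀ : X}

/-- The homomorphism from the fundamental group given by the values of a cocycle on loops. -/
def IsCocycle.hom {F : C(I, X) → G} (hF : IsCocycle F) (x₀ : X) : FundamentalGroup X x₀ →* G where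
  toFun g := Quotient.lift (fun p : Path x₀ x₀ => F p) (fun _ _ h => hF.homotopic h) (toPath g)
  map_one' := hF.apply_refl x₀
  map_mul' := by
    rintro ⟨p⟩ ⟨q⟩
    exact hF.trans q p

theorem IsCocycle.hom_comp_map {F : C(I, Y) → G} (hF : IsCocycle F) (f : C(X, Y)) (x₀ : X) :
    (hF.hom (f x₀)).comp (FundamentalGroup.map f x₀) = (hF.comap f).hom x₀ := by
  ext ⟨p⟩
  rfl

/-- The tautological cocycle of a family `τ` of paths from the base point to all points: a path
is closed up by `τ` to a loop, whose class is its value. -/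
def loopCocycle (τ : ∀ a, Path x₀ a) (γ : C(I, X)) : FundamentalGroup X x₀ :=
  fromPath (.mk (((τ (γ 0)).trans ⟨γ, rfl, rfl⟩).trans (τ (γ 1)).symm))

theorem loopCocycle_coe (τ : ∀ a, Path x₀ a) {a b : X} (p : Path a b) :
    loopCocycle τ p = fromPath (((mk (τ a)).trans (.mk p)).trans (.symm (.mk (τ b)))) := by
  obtain ⟨γ, rfl, rfl⟩ := p
  rfl

theorem isCocycle_loopCocycle (τ : ∀ a, Path x₀ a) : IsCocycle (loopCocycle τ) where
  trans {a b c} p q := by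
    have hcancel : (symm (.mk (τ b))).trans ((mk (τ b)).trans
        ((mk q).trans (.symm (.mk (τ c))))) = (mk q).trans (.symm (.mk (τ c))) := by
      rw [← trans_assoc, symm_trans, refl_trans]
    simp only [loopCocycle_coe, mul_def, mk_trans, trans_assoc]
    exact congrArg _ (congrArg _ (congrArg _ hcancel.symm))
  homotopic h := by
    rw [loopCocycle_coe, loopCocycle_coe, Path.Homotopic.Quotient.eq.2 h]

theorem IsCocycle.hom_eq_of_eq_comp_loopCocycle {τ : ∀ a, Path x₀ a} {F : C(I, X) → G}
    (hF : IsCocycle F) {φ : FundamentalGroup X x₀ →* G} (h : F = φ ∘ loopCocycle τ)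
    (hτ : (τ x₀).Homotopic (.refl x₀)) : hF.hom x₀ = φ := by
  subst h
  ext ⟨p⟩
  change φ (loopCocycle τ p) = φ (fromPath (.mk p))
  rw [loopCocycle_coe, Path.Homotopic.Quotient.eq.2 hτ, ← mk_symm, Path.refl_symm, mk_refl,
    refl_trans, trans_refl]

theorem map_loopCocycle (f : C(X, Y)) {τ : ∀ a, Path x₀ a} {τ' : ∀ b, Path (f x₀) b}
    (h : ∀ a, (τ a).map f.continuous = τ' (f a)) (γ : C(I, X)) :
    FundamentalGroup.map f x₀ (loopCocycle τ γ) = loopCocycle τ' (f.comp γ) := by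
  have hmap {a : X} (p : Path x₀ a) {b : X} (q : Path a b) (r : Path b x₀) :
      ((p.trans q).trans r).map f.continuous =
        ((p.map f.continuous).trans (q.map f.continuous)).trans (r.map f.continuous) := by
    rw [Path.map_trans, Path.map_trans]
  simp only [loopCocycle, ContinuousMap.comp_apply, ← h]
  exact congrArg (fun p => fromPath (.mk p)) (hmap _ _ _)

theorem loopCocycle_comp_eq_one [SimplyConnectedSpace X] (f : C(X, Y)) {τ : ∀ a, Path x₀ a}
    {τ' : ∀ b, Path (f x₀) b} (h : ∀ a, (τ a).map f.continuous = τ' (f a)) (γ : C(I, X)) :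
    loopCocycle τ' (f.comp γ) = 1 := by
  rw [← map_loopCocycle f h, Subsingleton.elim (loopCocycle τ γ) 1, map_one]

end FundamentalGroup

section VanKampen

open FundamentalGroup

variable {X : Type*} [TopologicalSpace X] {U V : Set X} {x₀ : X}

theorem exists_path_union (hU : IsPathConnected U) (hV : IsPathConnected V)
    (hUV : IsPathConnected (U ∩ V)) (hx₀ : x₀ ∈ U ∩ V) (a : ↥(U ∪ V)) :
    ∃ p : Path x₀ a, (↑a ∈ U → ∀ t, p t ∈ U) ∧ (↑a ∈ V → ∀ t, p t ∈ V) := by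
  by_cases haU : ↑a ∈ U
  · by_cases haV : ↑a ∈ V
    · obtain ⟨p, hp⟩ := hUV.joinedIn x₀ hx₀ a ⟨haU, haV⟩
      exact ⟨p, fun _ t => (hp t).1, fun _ t => (hp t).2⟩
    · obtain ⟨p, hp⟩ := hU.joinedIn x₀ hx₀.1 a haU
      exact ⟨p, fun _ => hp, fun h => absurd h haV⟩
  · obtain ⟨p, hp⟩ := hV.joinedIn x₀ hx₀.2 a (a.2.resolve_left haU)
    exact ⟨p, fun h => absurd h haU, fun _ => hp⟩

theorem exists_compatible_paths (hU : IsPathConnected U) (hV : IsPathConnected V)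
    (hUV : IsPathConnected (U ∩ V)) (hx₀ : x₀ ∈ U ∩ V) :
    ∃ (τ : ∀ a, Path (X := ↥(U ∪ V)) ⟨x₀, Or.inl hx₀.1⟩ a) (τU : ∀ a, Path (X := U) ⟨x₀, hx₀.1⟩ a)
      (τV : ∀ a, Path (X := V) ⟨x₀, hx₀.2⟩ a) (τUV : ∀ a, Path (X := ↥(U ∩ V)) ⟨x₀, hx₀⟩ a),
      (∀ a, (τU a).map (continuous_inclusion subset_union_left) = τ ⟨a, Or.inl a.2⟩) ∧
      (∀ a, (τV a).map (continuous_inclusion subset_union_right) = τ ⟨a, Or.inr a.2⟩) ∧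
      (∀ a, (τUV a).map (continuous_inclusion inter_subset_left) = τU ⟨a, a.2.1⟩) ∧
      ∀ a, (τUV a).map (continuous_inclusion inter_subset_right) = τV ⟨a, a.2.2⟩ := by
  choose p hpU hpV using exists_path_union hU hV hUV hx₀
  exact ⟨fun a => restrictPath (S := U ∪ V) (p a) fun t => a.2.imp (hpU a · t) (hpV a · t),
    fun a => restrictPath (p ⟨a, Or.inl a.2⟩) (hpU _ a.2),
    fun a => restrictPath (p ⟨a, Or.inr a.2⟩) (hpV _ a.2),
    fun a => restrictPath (p ⟨a, Or.inl a.2.1⟩) (S := U ∩ V) fun t =>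
      ⟨hpU _ a.2.1 t, hpV _ a.2.2 t⟩,
    fun _ => rfl, fun _ => rfl, fun _ => rfl, fun _ => rfl⟩

theorem homotopic_refl_of_map {Y : Type*} [TopologicalSpace Y] (f : C(X, Y)) {p : Path x₀ x₀}
    {q : Path (f x₀) (f x₀)} (hp : p.Homotopic (.refl x₀)) (h : p.map f.continuous = q) :
    q.Homotopic (.refl (f x₀)) :=
  h ▸ hp.map f

theorem exists_isCocycle_of_homs {G : Type*} [Group G] (hU : IsOpen U) (hV : IsOpen V)
    [SimplyConnectedSpace ↥(U ∩ V)] {hx₀ : x₀ ∈ U ∩ V} {τU : ∀ a, Path (X := U) ⟨x₀, hx₀.1⟩ a}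
    {τV : ∀ a, Path (X := V) ⟨x₀, hx₀.2⟩ a} {τUV : ∀ a, Path (X := ↥(U ∩ V)) ⟨x₀, hx₀⟩ a}
    (hτU : ∀ a, (τUV a).map (continuous_inclusion inter_subset_left) = τU ⟨a, a.2.1⟩)
    (hτV : ∀ a, (τUV a).map (continuous_inclusion inter_subset_right) = τV ⟨a, a.2.2⟩)
    (φ : FundamentalGroup U ⟨x₀, hx₀.1⟩ →* G) (ψ : FundamentalGroup V ⟨x₀, hx₀.2⟩ →* G) :
    ∃ F : C(I, ↥(U ∪ V)) → G, IsCocycle F ∧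
      pathComap F (inclusion subset_union_left) = φ ∘ loopCocycle τU ∧
      pathComap F (inclusion subset_union_right) = ψ ∘ loopCocycle τV := by
  let jU : C(↥(U ∩ V), U) := inclusion inter_subset_left
  let jV : C(↥(U ∩ V), V) := inclusion inter_subset_right
  refine exists_isCocycle_union hU hV ((isCocycle_loopCocycle τU).monoidHom_comp φ)
    ((isCocycle_loopCocycle τV).monoidHom_comp ψ) (funext fun γ => ?_)
  have hφ : loopCocycle τU (jU.comp γ) = 1 := loopCocycle_comp_eq_one jU hτU γ
  have hψ : loopCocycle τV (jV.comp γ) = 1 := loopCocycle_comp_eq_one jV hτV γ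
  exact ((congrArg φ hφ).trans (map_one φ)).trans ((congrArg ψ hψ).trans (map_one ψ)).symm

theorem nonempty_mulEquiv_coprod (hU : IsOpen U) (hV : IsOpen V) (hUc : IsPathConnected U)
    (hVc : IsPathConnected V) (hUV : IsSimplyConnected (U ∩ V)) (hx₀ : x₀ ∈ U ∩ V) :
    Nonempty (FundamentalGroup ↥(U ∪ V) ⟨x₀, Or.inl hx₀.1⟩ ≃*
      Monoid.Coprod (FundamentalGroup U ⟨x₀, hx₀.1⟩) (FundamentalGroup V ⟨x₀, hx₀.2⟩)) := by
  have : SimplyConnectedSpace ↥(U ∩ V) := hUV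
  obtain ⟨τ, τU, τV, τUV, hτU, hτV, hτUVU, hτUVV⟩ :=
    exists_compatible_paths hUc hVc hUV.isPathConnected hx₀
  let iU : C(U, ↥(U ∪ V)) := inclusion subset_union_left
  let iV : C(V, ↥(U ∪ V)) := inclusion subset_union_right
  have hτUV₀ : (τUV ⟨x₀, hx₀⟩).Homotopic (.refl _) := SimplyConnectedSpace.paths_homotopic _ _
  have hτU₀ := homotopic_refl_of_map (inclusion inter_subset_left) hτUV₀ (hτUVU _)
  have hτV₀ := homotopic_refl_of_map (inclusion inter_subset_right) hτUV₀ (hτUVV _)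
  have hτ₀ := homotopic_refl_of_map iU hτU₀ (hτU _)
  obtain ⟨F, hF, hFU, hFV⟩ := exists_isCocycle_of_homs hU hV hτUVU hτUVV
    (G := Monoid.Coprod (FundamentalGroup U ⟨x₀, hx₀.1⟩) (FundamentalGroup V ⟨x₀, hx₀.2⟩))
    Monoid.Coprod.inl Monoid.Coprod.inr
  let ι := Monoid.Coprod.lift (FundamentalGroup.map iU ⟨x₀, hx₀.1⟩)
    (FundamentalGroup.map iV ⟨x₀, hx₀.2⟩)
  have hιF : ι ∘ F = loopCocycle τ := by
    refine (hF.monoidHom_comp ι).ext_union hU hV (isCocycle_loopCocycle τ)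
      (funext fun γ => ?_) (funext fun γ => ?_)
    · exact (congrArg ι (congrFun hFU γ)).trans (map_loopCocycle iU hτU γ)
    · exact (congrArg ι (congrFun hFV γ)).trans (map_loopCocycle iV hτV γ)
  have hι : ι.comp (hF.hom _) = .id _ := by
    rw [← (hF.monoidHom_comp ι).hom_eq_of_eq_comp_loopCocycle (φ := .id _) hιF hτ₀]
    ext ⟨p⟩
    rfl
  have hU' := (hF.hom_comp_map iU _).trans ((hF.comap iU).hom_eq_of_eq_comp_loopCocycle hFU hτU₀)
  have hV' := (hF.hom_comp_map iV _).trans ((hF.comap iV).hom_eq_of_eq_comp_loopCocycle hFV hτV₀)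
  exact ⟨MonoidHom.toMulEquiv (hF.hom _) ι hι (Monoid.Coprod.hom_ext hU' hV')⟩

theorem nonempty_mulEquiv_of_isSimplyConnected (hU : IsOpen U) (hV : IsOpen V)
    (hUc : IsPathConnected U) (hVs : IsSimplyConnected V) (hUV : IsSimplyConnected (U ∩ V))
    (hx₀ : x₀ ∈ U ∩ V) :
    Nonempty (FundamentalGroup ↥(U ∪ V) ⟨x₀, Or.inl hx₀.1⟩ ≃*
      FundamentalGroup U ⟨x₀, hx₀.1⟩) := by
  have : SimplyConnectedSpace V := hVs
  obtain ⟨e⟩ := nonempty_mulEquiv_coprod hU hV hUc hVs.isPathConnected hUV hx₀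
  have : Unique (FundamentalGroup V ⟨x₀, hx₀.2⟩) := Unique.mk' _
  exact ⟨e.trans ((MulEquiv.coprodCongr (.refl _) (.ofUnique : _ ≃* PUnit.{1})).trans
    (.coprodPUnit _))⟩

end VanKampen

section Geometry

variable {E : Type*} [NormedAddCommGroup E] [NormedSpace ℝ E] {W : Set E}

theorem exists_mem_sphere_joinedIn_diff_ball (hW : Convex ℝ W) {c : E} {r : ℝ} (hr : 0 < r)
    (hc : c ∈ W) {z : E} (hz : z ∈ W \ ball c r) :
    ∃ w ∈ sphere c r, JoinedIn (W \ ball c r) z w := by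
  have hrz : r ≤ dist c z := by simpa [dist_comm] using hz.2
  have hpos : 0 < dist c z := hr.trans_le hrz
  let s := r / dist c z
  have hs : s ∈ Icc s 1 := ⟨le_rfl, (div_le_one hpos).2 hrz⟩
  refine ⟨AffineMap.lineMap c z s, ?_, ?_⟩
  · rw [mem_sphere, dist_lineMap_left, Real.norm_of_nonneg (by positivity),
      div_mul_cancel₀ _ hpos.ne']
  · have hray := ((convex_Icc s 1).isPathConnected ⟨s, hs⟩).image
      (f := AffineMap.lineMap (k := ℝ) c z) AffineMap.lineMap_continuous
    refine (hray.joinedIn z ⟨1, ⟨hs.2, le_rfl⟩, AffineMap.lineMap_apply_one c z⟩ _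
      ⟨s, hs, rfl⟩).mono ?_
    rintro _ ⟨t, ht, rfl⟩
    have ht₀ : 0 ≤ t := (by positivity : 0 ≤ s).trans ht.1
    refine ⟨hW.lineMap_mem hc hz.1 ⟨ht₀, ht.2⟩, ?_⟩
    rw [mem_ball, dist_lineMap_left, Real.norm_of_nonneg ht₀, not_lt]
    exact (div_le_iff₀ hpos).1 ht.1

theorem joinedIn_diff_ball (hE : 1 < Module.rank ℝ E) (hW : Convex ℝ W) {c : E} {r : ℝ}
    (hr : 0 < r) (hc : closedBall c r ⊆ W) {x y : E} (hx : x ∈ W \ ball c r)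
    (hy : y ∈ W \ ball c r) : JoinedIn (W \ ball c r) x y := by
  have hcW : c ∈ W := hc (mem_closedBall_self hr.le)
  obtain ⟨x', hx', hxx'⟩ := exists_mem_sphere_joinedIn_diff_ball hW hr hcW hx
  obtain ⟨y', hy', hyy'⟩ := exists_mem_sphere_joinedIn_diff_ball hW hr hcW hy
  have hsphere : sphere c r ⊆ W \ ball c r := fun z hz =>
    ⟨hc (sphere_subset_closedBall hz), fun h => (mem_ball.1 h).ne (mem_sphere.1 hz)⟩
  have hx'y' := ((isPathConnected_sphere hE c hr.le).joinedIn x' hx' y' hy').mono hsphere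
  exact (hxx'.trans hx'y').trans hyy'.symm

theorem joinedIn_diff_union (hWo : IsOpen W) (hW : Convex ℝ W) {A B : Set E} (hA : IsClosed A)
    (hB : IsClosed B) (hAB : Disjoint A B) {x y : E} (hxA : JoinedIn (W \ A) x y)
    (hxB : JoinedIn (W \ B) x y) : JoinedIn (W \ (A ∪ B)) x y := by
  have hunion : W \ A ∪ W \ B = W := by
    rw [← sdiff_inter, hAB.inter_eq, sdiff_empty]
  rw [← sdiff_inter_sdiff]
  refine joinedIn_inter (hWo.sdiff hA) (hWo.sdiff hB) ?_ hxA hxB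
  rw [hunion]
  exact isSimplyConnected_of_convex hW ⟨x, hxA.source_mem.1⟩

theorem joinedIn_diff_of_isTotallyDisconnected (hE : 1 < Module.rank ℝ E) (hWo : IsOpen W)
    (hW : Convex ℝ W) {K : Set E} (hK : IsCompact K) (hKd : IsTotallyDisconnected K)
    (hKW : K ⊆ W) {x y : E} (hx : x ∈ W \ K) (hy : y ∈ W \ K) : JoinedIn (W \ K) x y := by
  have : CompactSpace K := isCompact_iff_compactSpace.1 hK
  have : TotallyDisconnectedSpace K := totallyDisconnectedSpace_subtype_iff.2 hKd
  have hclosed (A : Set K) (hA : IsClosed A) : IsClosed ((↑) '' A : Set E) :=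
    (hA.isCompact.image continuous_subtype_val).isClosed
  let p (s : Set K) : Prop := ∃ A, s ⊆ A ∧ IsClopen A ∧ JoinedIn (W \ (↑) '' A) x y
  have hempty : p ∅ := by
    refine ⟨∅, subset_rfl, isClopen_empty, .of_segment_subset ?_⟩
    rw [image_empty, sdiff_empty]
    exact hW.segment_subset hx.1 hy.1
  have hunion (s t : Set K) : p s → p t → p (s ∪ t) := by
    rintro ⟨A, hsA, hA, hxyA⟩ ⟨B, htB, hB, hxyB⟩
    refine ⟨A ∪ B, union_subset_union hsA htB, hA.union hB, ?_⟩
    rw [← union_sdiff_self, image_union]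
    exact joinedIn_diff_union hWo hW (hclosed A hA.1) (hclosed _ (hB.diff hA).1)
      ((disjoint_image_iff Subtype.val_injective).2 disjoint_sdiff_right) hxyA
      (hxyB.mono (sdiff_subset_sdiff_right (image_mono sdiff_subset)))
  have hlocal (k : K) : ∃ s ∈ 𝓝 k, p s := by
    have hopen : IsOpen (W \ {x, y}) := hWo.sdiff (toFinite _).isClosed
    obtain ⟨r, hr, hrW⟩ := nhds_basis_closedBall.mem_iff.1 (hopen.mem_nhds
      ⟨hKW k.2, by rintro (h | h); exacts [hx.2 (h ▸ k.2), hy.2 (h ▸ k.2)]⟩)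
    obtain ⟨A, hA, hkA, hAr⟩ := compact_exists_isClopen_in_isOpen
      (isOpen_ball.preimage continuous_subtype_val) (mem_ball_self hr : (k : E) ∈ ball (k : E) r)
    have hball : JoinedIn (W \ ball (k : E) r) x y :=
      joinedIn_diff_ball hE hW hr (hrW.trans sdiff_subset)
        ⟨hx.1, fun h => (hrW (ball_subset_closedBall h)).2 (by simp)⟩
        ⟨hy.1, fun h => (hrW (ball_subset_closedBall h)).2 (by simp)⟩
    exact ⟨A, hA.isOpen.mem_nhds hkA, A, subset_rfl, hA,
      hball.mono (sdiff_subset_sdiff_right (image_subset_iff.2 hAr))⟩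
  obtain ⟨A, hA, -, hxy⟩ : p univ := isCompact_univ.induction_on hempty
    (fun _ _ hst ⟨A, hA⟩ => ⟨A, hst.trans hA.1, hA.2⟩) hunion
    fun k _ => (hlocal k).imp fun s hs => ⟨mem_nhdsWithin_of_mem_nhds hs.1, hs.2⟩
  rwa [univ_subset_iff.1 hA, image_univ, Subtype.range_coe] at hxy

theorem isPathConnected_diff (hE : 1 < Module.rank ℝ E) (hWo : IsOpen W)
    (hW : Convex ℝ W) {K : Set E} (hK : IsCompact K) (hKd : IsTotallyDisconnected K)
    (hKW : K ⊆ W) (hne : (W \ K).Nonempty) : IsPathConnected (W \ K) :=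
  isPathConnected_iff.2 ⟨hne, fun _ hx _ hy =>
    joinedIn_diff_of_isTotallyDisconnected hE hWo hW hK hKd hKW hx hy⟩

theorem nonempty_mulEquiv_basePoint {X : Type*} [TopologicalSpace X] {S T : Set X}
    (hS : IsPathConnected S) (hST : S = T) {x y : X} (hx : x ∈ S) (hy : y ∈ T) :
    Nonempty (FundamentalGroup S ⟨x, hx⟩ ≃* FundamentalGroup T ⟨y, hy⟩) := by
  subst hST
  have := isPathConnected_iff_pathConnectedSpace.1 hS
  exact ⟨FundamentalGroup.fundamentalGroupMulEquivOfPathConnected _ _⟩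

variable {P Q K L : Set E} {x₀ x y z : E}

theorem isPathConnected_diff_of_disjoint (hE : 1 < Module.rank ℝ E) (hPo : IsOpen P)
    (hP : Convex ℝ P) (hPQ : P ∪ Q = univ) (hK : IsCompact K) (hKd : IsTotallyDisconnected K)
    (hKQ : Disjoint K Q) (hx₀ : x₀ ∈ P ∩ Q) : IsPathConnected (P \ K) :=
  isPathConnected_diff hE hPo hP hK hKd
    (fun w hw => (hPQ.ge (mem_univ w)).resolve_right (hKQ.notMem_of_mem_left hw))
    ⟨x₀, hx₀.1, hKQ.notMem_of_mem_right hx₀.2⟩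

theorem nonempty_mulEquiv_diff_compl (hE : 1 < Module.rank ℝ E) (hPo : IsOpen P)
    (hP : Convex ℝ P) (hQo : IsOpen Q) (hQ : Convex ℝ Q) (hPQ : P ∪ Q = univ) (hK : IsCompact K)
    (hKd : IsTotallyDisconnected K) (hKQ : Disjoint K Q) (hx₀ : x₀ ∈ (P \ K) ∩ Q) (hy : y ∈ Kᶜ) :
    Nonempty (FundamentalGroup ↥(P \ K) ⟨x₀, hx₀.1⟩ ≃* FundamentalGroup ↥Kᶜ ⟨y, hy⟩) := by
  have hinter : (P \ K) ∩ Q = P ∩ Q := by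
    rw [sdiff_inter_right_comm, sdiff_eq_left]
    exact hKQ.symm.mono_left inter_subset_right
  have hunion : P \ K ∪ Q = Kᶜ := by
    rw [← hKQ.symm.sdiff_eq_left, ← union_sdiff_distrib, hPQ, compl_eq_univ_sdiff]
  have hU := isPathConnected_diff_of_disjoint hE hPo hP hPQ hK hKd hKQ (hinter.le hx₀)
  have hQs : IsSimplyConnected Q := isSimplyConnected_of_convex hQ ⟨x₀, hx₀.2⟩
  have hPQs : IsSimplyConnected ((P \ K) ∩ Q) := by
    rw [hinter]
    exact isSimplyConnected_of_convex (hP.inter hQ) ⟨x₀, hinter.le hx₀⟩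
  obtain ⟨e⟩ := nonempty_mulEquiv_of_isSimplyConnected (hPo.sdiff hK.isClosed) hQo hU hQs hPQs hx₀
  obtain ⟨e'⟩ := nonempty_mulEquiv_basePoint (hU.union hQs.isPathConnected ⟨x₀, hx₀⟩) hunion
    (Or.inl hx₀.1) hy
  exact ⟨e.symm.trans e'⟩

theorem nonempty_mulEquiv_compl_union (hE : 1 < Module.rank ℝ E) (hPo : IsOpen P)
    (hP : Convex ℝ P) (hQo : IsOpen Q) (hQ : Convex ℝ Q) (hPQ : P ∪ Q = univ)
    (hne : (P ∩ Q).Nonempty) (hK : IsCompact K) (hKd : IsTotallyDisconnected K)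
    (hKQ : Disjoint K Q) (hL : IsCompact L) (hLd : IsTotallyDisconnected L) (hLP : Disjoint L P)
    (hx : x ∈ (K ∪ L)ᶜ) (hy : y ∈ Kᶜ) (hz : z ∈ Lᶜ) :
    Nonempty (FundamentalGroup ↥(K ∪ L)ᶜ ⟨x, hx⟩ ≃*
      Monoid.Coprod (FundamentalGroup ↥Kᶜ ⟨y, hy⟩) (FundamentalGroup ↥Lᶜ ⟨z, hz⟩)) := by
  obtain ⟨x₀, hx₀⟩ := hne
  have hQP : Q ∪ P = univ := by rwa [union_comm]
  have hU := isPathConnected_diff_of_disjoint hE hPo hP hPQ hK hKd hKQ hx₀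
  have hV := isPathConnected_diff_of_disjoint hE hQo hQ hQP hL hLd hLP hx₀.symm
  have hPQw (w : E) : w ∈ P ∨ w ∈ Q := hPQ.ge (mem_univ w)
  have hinter : P \ K ∩ (Q \ L) = P ∩ Q := by grind [disjoint_left.1 hKQ, disjoint_left.1 hLP]
  have hunion : P \ K ∪ Q \ L = (K ∪ L)ᶜ := by
    grind [disjoint_left.1 hKQ, disjoint_left.1 hLP]
  have hx₀' : x₀ ∈ P \ K ∩ (Q \ L) := hinter.ge hx₀
  have hUV : IsSimplyConnected (P \ K ∩ (Q \ L)) := by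
    rw [hinter]
    exact isSimplyConnected_of_convex (hP.inter hQ) ⟨x₀, hx₀⟩
  obtain ⟨e⟩ := nonempty_mulEquiv_coprod (hPo.sdiff hK.isClosed) (hQo.sdiff hL.isClosed) hU hV hUV
    hx₀'
  obtain ⟨eX⟩ := nonempty_mulEquiv_basePoint (hU.union hV ⟨x₀, hx₀'⟩) hunion (Or.inl hx₀'.1) hx
  obtain ⟨eK⟩ := nonempty_mulEquiv_diff_compl hE hPo hP hQo hQ hPQ hK hKd hKQ ⟨hx₀'.1, hx₀.2⟩ hy
  obtain ⟨eL⟩ := nonempty_mulEquiv_diff_compl hE hQo hQ hPo hP hQP hL hLd hLP ⟨hx₀'.2, hx₀.1⟩ hz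
  exact ⟨eX.symm.trans (e.trans (eK.coprodCongr eL))⟩

end Geometry

end VanKampen

theorem stmt_2_general {E : Type*} [NormedAddCommGroup E] [NormedSpace ℝ E]
    (hE : 1 < Module.rank ℝ E) {A B K L : Set E} (hA : Convex ℝ A) (hAc : IsCompact A)
    (hAne : A.Nonempty) (hB : Convex ℝ B) (hBc : IsClosed B) (hBne : B.Nonempty)
    (hAB : Disjoint A B) (hK : IsCompact K) (hKd : IsTotallyDisconnected K) (hKA : K ⊆ A)
    (hL : IsCompact L) (hLd : IsTotallyDisconnected L) (hLB : L ⊆ B) {x y z : E}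
    (hx : x ∈ (K ∪ L)ᶜ) (hy : y ∈ Kᶜ) (hz : z ∈ Lᶜ) :
    Nonempty (FundamentalGroup ↥(K ∪ L)ᶜ ⟨x, hx⟩ ≃*
      Monoid.Coprod (FundamentalGroup ↥Kᶜ ⟨y, hy⟩) (FundamentalGroup ↥Lᶜ ⟨z, hz⟩)) := by
  obtain ⟨f, a, b, hfA, hab, hfB⟩ := geometric_hahn_banach_compact_closed hA hAc hB hBc hAB
  obtain ⟨p, hp⟩ := hAne
  obtain ⟨q, hq⟩ := hBne
  obtain ⟨c, hac, hcb⟩ := exists_between hab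
  obtain ⟨x₀, hx₀⟩ : c ∈ range f := mem_range_of_exists_le_of_exists_ge f.continuous
    ⟨p, ((hfA p hp).trans hac).le⟩ ⟨q, (hcb.trans (hfB q hq)).le⟩
  refine VanKampen.nonempty_mulEquiv_compl_union hE (P := {w | f w < b}) (Q := {w | a < f w})
    (isOpen_lt f.continuous continuous_const) (convex_halfSpace_lt f.isLinear b)
    (isOpen_lt continuous_const f.continuous) (convex_halfSpace_gt f.isLinear a)
    (eq_univ_of_forall fun w => (lt_or_ge (f w) b).imp_right hab.trans_le)
    ⟨x₀, hx₀.trans_lt hcb, hac.trans_eq hx₀.symm⟩ hK hKd ?_ hL hLd ?_ hx hy hz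
  · exact disjoint_left.2 fun w hw => (hfA w (hKA hw)).not_gt
  · exact disjoint_left.2 fun w hw => (hfB w (hLB hw)).not_gt

/-- For Cantor sets contained in disjoint closed balls, the fundamental group of the
complement of the union is the free product of the fundamental groups of the complements. -/
theorem stmt_2 (c₁ c₂ : R3) (r₁ r₂ : ℝ)
    (C₁ C₂ : Set R3) (h₁ : IsCantorSubset C₁) (h₂ : IsCantorSubset C₂)
    (hdisj : Disjoint (closedBall c₁ r₁) (closedBall c₂ r₂))
    (hB₁ : C₁ ⊆ closedBall c₁ r₁) (hB₂ : C₂ ⊆ closedBall c₂ r₂) :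
    ∀ (x : R3) (hx : x ∈ (C₁ ∪ C₂)ᶜ) (y₁ : R3) (hy₁ : y₁ ∈ C₁ᶜ) (y₂ : R3) (hy₂ : y₂ ∈ C₂ᶜ),
      Nonempty (FundamentalGroup ↥((C₁ ∪ C₂)ᶜ) ⟨x, hx⟩ ≃*
        Monoid.Coprod (FundamentalGroup ↥(C₁ᶜ) ⟨y₁, hy₁⟩)
          (FundamentalGroup ↥(C₂ᶜ) ⟨y₂, hy₂⟩)) := by
  intro x hx y₁ hy₁ y₂ hy₂
  have hE : 1 < Module.rank ℝ R3 := by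
    rw [← Module.finrank_eq_rank, finrank_euclideanSpace_fin]
    norm_num
  obtain ⟨hne₁, hc₁, -, hd₁⟩ := h₁
  obtain ⟨hne₂, hc₂, -, hd₂⟩ := h₂
  exact stmt_2_general hE (convex_closedBall c₁ r₁) (isCompact_closedBall c₁ r₁)
    (hne₁.mono hB₁) (convex_closedBall c₂ r₂) isClosed_closedBall (hne₂.mono hB₂) hdisj
    hc₁ hd₁ hB₁ hc₂ hd₂ hB₂ hx hy₁ hy₂
end
end

section
/- Let C₁ and C₂ be Cantor sets in ℝ³ contained in disjoint closed balls B₁ and B₂ respectively, and let C = C₁ ∪ C₂. If ℝ³ \ C₁ is simply connected, then the fundamental group of ℝ³ \ C is isomorphic to the fundamental group of ℝ³ \ C₂. -/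
open Metric Set

noncomputable section

/-!
Separate `C₁` from `C₂` by two parallel hyperplanes `f = u` and `f = v` with `f < u` on `C₁`,
`u < v`, and `v < f` on `C₂`, and let `σ` push the half space `f < u` onto the hyperplane `f = u`.
Since `σ` misses `C₁`, it maps the complement of `C₂` to that of `C₁ ∪ C₂`. In the complement of
`C₂` a straight-line homotopy connects `σ` to the identity. In the complement of `C₁ ∪ C₂` it
need not be homotopic to the identity, but the map it induces on fundamental groupoids is
naturally isomorphic to the identity: `σ` is the identity where `u < f`, and it preserves the part
where `f ≤ v`, which is simply connected, being a retract of the complement of `C₁`. By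
subdivision, naturality need only be checked for paths in one of the open sets `f < v` and
`u < f`.

The complement of a compact totally disconnected set `K` is path-connected because any two points
outside `K` lie on an affine plane, where Borsuk's argument applies: on `K`, the function `z - p`
has a continuous logarithm, which extends to the plane. If `p` were in a bounded component `U` of
the complement, replacing `z - p` on `U` by the exponential of this extension would give a
nowhere vanishing continuous function on the plane, hence a continuous logarithm of `z - p` on a
large circle.
-/

theorem exists_continuousMap_exp_eq {X : Type*} [TopologicalSpace X] [CompactSpace X] [T2Space X]
    [TotallyDisconnectedSpace X] (f : C(X, ℂ)) (hf : ∀ x, f x ≠ 0) :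
    ∃ g : C(X, ℂ), ∀ x, Complex.exp (g x) = f x := by
  let f₀ : C(X, {z : ℂ // z ≠ 0}) := ⟨fun x ↦ ⟨f x, hf x⟩, by fun_prop⟩
  let S : Set ({z : ℂ // z ≠ 0} × {z : ℂ // z ≠ 0}) := {q | (q.1 / q.2 : ℂ) ∈ Complex.slitPlane}
  have hS : S ∈ nhdsSet (diagonal _) := by
    have hSo : IsOpen S := Complex.isOpen_slitPlane.preimage <|
      .div (by fun_prop) (by fun_prop) fun q ↦ q.2.2
    refine hSo.mem_nhdsSet.2 ?_
    rintro ⟨x, y⟩ (rfl : x = y)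
    simp [S, div_self x.2]
  obtain ⟨n, k, c, hk, hkc⟩ := f₀.exists_finite_approximation_of_mem_nhds_diagonal hS
  have hc {φ : {z : ℂ // z ≠ 0} → ℂ} : Continuous fun x ↦ φ (c (k x)) :=
    (continuous_of_discreteTopology (f := fun i ↦ φ (c i))).comp hk
  refine ⟨⟨fun x ↦ Complex.log (f x / c (k x)) + Complex.log (c (k x)),
    .add (.clog (f.continuous.div hc fun x ↦ (c (k x)).2) hkc) (hc (φ := fun z ↦ Complex.log z))⟩,
    fun x ↦ ?_⟩
  have hck := (c (k x)).2
  rw [ContinuousMap.coe_mk, Complex.exp_add, Complex.exp_log (div_ne_zero (hf x) hck),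
    Complex.exp_log hck, div_mul_cancel₀ _ hck]

theorem not_exists_continuousOn_exp_eq_sub_sphere (p : ℂ) {ρ : ℝ} (hρ : 0 < ρ) :
    ¬ ∃ L : ℂ → ℂ, ContinuousOn L (sphere p ρ) ∧ ∀ z ∈ sphere p ρ, Complex.exp (L z) = z - p := by
  rintro ⟨L, hL, hexp⟩
  have hcircle (t : ℝ) : circleMap p ρ t ∈ sphere p ρ := circleMap_mem_sphere p hρ.le t
  let H : ℝ → ℂ := fun t ↦ L (circleMap p ρ t) - t * Complex.I
  have hH : Continuous H :=
    (hL.comp_continuous (continuous_circleMap p ρ) hcircle).sub (by fun_prop)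
  have hexpH (t : ℝ) : Complex.exp (H t) = ρ := by
    rw [Complex.exp_sub, hexp _ (hcircle t), circleMap_sub_center, circleMap_zero,
      mul_div_cancel_right₀ _ (Complex.exp_ne_zero _)]
  have hconst := Complex.isCoveringMap_exp.eq_of_comp_eq (g₂ := fun _ ↦ H 0) hH
    continuous_const (by ext t; simp [hexpH]) 0 rfl
  have h2π : H (2 * Real.pi) = H 0 := congrFun hconst _
  have hL2π : circleMap p ρ (2 * Real.pi) = circleMap p ρ 0 := by
    simpa using periodic_circleMap p ρ 0
  simp [H, hL2π, Real.pi_ne_zero] at h2π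

theorem not_isBounded_of_exp_eq_sub_on_frontier {U : Set ℂ} {p : ℂ} (hp : p ∈ U) (G : C(ℂ, ℂ))
    (hG : ∀ z ∈ frontier U, Complex.exp (G z) = z - p) : ¬ Bornology.IsBounded U := by
  classical
  intro hU
  let F : ℂ → ℂ := U.piecewise (fun z ↦ Complex.exp (G z)) (fun z ↦ z - p)
  have hF : Continuous F := Continuous.piecewise hG (by fun_prop) (by fun_prop)
  have hF₀ (z : ℂ) : F z ≠ 0 := by
    by_cases hz : z ∈ U
    · simp [F, hz]
    · simpa [F, hz, sub_eq_zero] using fun h : z = p ↦ hz (h ▸ hp)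
  obtain ⟨L, ⟨-, hL⟩, -⟩ := Complex.isCoveringMapOn_exp.existsUnique_continuousMap_lifts
    ⟨F, hF⟩ (Complex.exp_log (hF₀ 0)) hF₀
  obtain ⟨ρ, hρ, hUρ⟩ := hU.subset_ball_lt 0 p
  refine not_exists_continuousOn_exp_eq_sub_sphere p hρ
    ⟨L, L.continuous.continuousOn, fun z hz ↦ ?_⟩
  have hzU : z ∉ U := fun h ↦ (mem_ball.1 (hUρ h)).ne hz
  simpa [F, hzU] using congrFun hL z

theorem frontier_connectedComponentIn_subset_compl {X : Type*} [TopologicalSpace X]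
    [LocallyConnectedSpace X] {F : Set X} (hF : IsOpen F) (p : X) :
    frontier (connectedComponentIn F p) ⊆ Fᶜ := by
  intro z hz hzF
  rw [hF.connectedComponentIn.frontier_eq] at hz
  obtain ⟨w, hwz, hwp⟩ := mem_closure_iff.1 hz.1 _ hF.connectedComponentIn
    (mem_connectedComponentIn hzF)
  refine hz.2 ?_
  rw [connectedComponentIn_eq hwp, ← connectedComponentIn_eq hwz]
  exact mem_connectedComponentIn hzF

theorem not_isBounded_connectedComponentIn_compl {K : Set ℂ} (hK : IsCompact K)
    (hKd : IsTotallyDisconnected K) {p : ℂ} (hp : p ∉ K) :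
    ¬ Bornology.IsBounded (connectedComponentIn Kᶜ p) := by
  have : CompactSpace K := isCompact_iff_compactSpace.1 hK
  have : TotallyDisconnectedSpace K := totallyDisconnectedSpace_subtype_iff.2 hKd
  obtain ⟨g, hg⟩ := exists_continuousMap_exp_eq (X := K) ⟨fun z ↦ z - p, by fun_prop⟩
    fun z ↦ sub_ne_zero.2 (ne_of_mem_of_not_mem z.2 hp)
  obtain ⟨G, rfl⟩ := ContinuousMap.exists_restrict_eq hK.isClosed g
  refine not_isBounded_of_exp_eq_sub_on_frontier (mem_connectedComponentIn hp) G fun z hz ↦ ?_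
  have hzK : z ∈ K := by
    simpa using frontier_connectedComponentIn_subset_compl hK.isClosed.isOpen_compl p hz
  exact hg ⟨z, hzK⟩

theorem isPreconnected_compl_closedBall {E : Type*} [NormedAddCommGroup E] [NormedSpace ℝ E]
    (hE : 1 < Module.rank ℝ E) (x : E) (r : ℝ) : IsPreconnected (closedBall x r)ᶜ := by
  obtain hr | hr := lt_or_ge r 0
  · simpa [closedBall_eq_empty.2 hr] using isPreconnected_univ
  have himage : (closedBall x r)ᶜ = (fun q : ℝ × E ↦ x + q.1 • q.2) '' Ioi r ×ˢ sphere 0 1 := by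
    ext z
    constructor
    · intro hz
      have hzr : r < ‖z - x‖ := by simpa [dist_eq_norm] using hz
      have hz₀ : ‖z - x‖ ≠ 0 := (hr.trans_lt hzr).ne'
      exact ⟨(‖z - x‖, ‖z - x‖⁻¹ • (z - x)), ⟨hzr, by simp [norm_smul, hz₀]⟩,
        by simp [smul_inv_smul₀ hz₀]⟩
    · rintro ⟨⟨t, v⟩, ⟨ht, hv⟩, rfl⟩
      have hv : ‖v‖ = 1 := by simpa using hv
      simpa [norm_smul, hv, abs_of_pos (hr.trans_lt ht)] using ht
  rw [himage]
  exact (isPreconnected_Ioi.prod (isPreconnected_sphere hE 0 1)).image _ (by fun_prop)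

theorem isPathConnected_compl_of_isTotallyDisconnected_complex {K : Set ℂ} (hK : IsCompact K)
    (hKd : IsTotallyDisconnected K) : IsPathConnected Kᶜ := by
  obtain ⟨R, hKR⟩ := hK.isBounded.subset_closedBall 0
  have hR : IsPreconnected (closedBall (0 : ℂ) R)ᶜ :=
    isPreconnected_compl_closedBall (by simp) 0 R
  obtain ⟨q, hq⟩ := NormedSpace.exists_lt_norm ℝ ℂ R
  have hqR : q ∈ (closedBall (0 : ℂ) R)ᶜ := by simpa using hq
  have hRK := compl_subset_compl.2 hKR
  refine (hK.isClosed.isOpen_compl.isConnected_iff_isPathConnected).1 ⟨⟨q, hRK hqR⟩, ?_⟩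
  refine isPreconnected_of_forall q fun p hp ↦ ?_
  obtain ⟨z, hzp, hzR⟩ := not_subset.1 fun h ↦
    not_isBounded_connectedComponentIn_compl hK hKd hp (isBounded_closedBall.subset h)
  exact ⟨_, union_subset (connectedComponentIn_subset _ _) hRK, .inr hqR,
    .inl (mem_connectedComponentIn hp), isPreconnected_connectedComponentIn.union z hzp hzR hR⟩

theorem isPathConnected_compl_of_isTotallyDisconnected {E : Type*} [AddCommGroup E] [Module ℝ E]
    [TopologicalSpace E] [IsTopologicalAddGroup E] [ContinuousSMul ℝ E] [T2Space E]
    (hE : 1 < Module.rank ℝ E) {K : Set E} (hK : IsCompact K) (hKd : IsTotallyDisconnected K) :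
    IsPathConnected Kᶜ := by
  refine isPathConnected_iff.2 ⟨nonempty_compl.2 ?_, fun p hp q hq ↦ ?_⟩
  · rintro rfl
    have : Nontrivial E := rank_pos_iff_nontrivial.1 (zero_lt_one.trans hE)
    exact not_subsingleton E ⟨fun x y ↦
      hKd _ subset_rfl isPreconnected_univ (mem_univ x) (mem_univ y)⟩
  obtain rfl | hpq := eq_or_ne p q
  · exact .refl hp
  obtain ⟨w, hw⟩ := exists_linearIndependent_pair_of_one_lt_rank hE (sub_ne_zero.2 hpq.symm)
  let T : ℂ →ₗ[ℝ] E := Complex.reLm.smulRight (q - p) + Complex.imLm.smulRight w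
  have hT : T.ker = ⊥ := LinearMap.ker_eq_bot'.2 fun z hz ↦ by
    obtain ⟨hre, him⟩ := LinearIndependent.pair_iff.1 hw z.re z.im hz
    exact Complex.ext hre him
  let e : ℂ → E := fun z ↦ p + T z
  have he : Topology.IsClosedEmbedding e :=
    (Homeomorph.addLeft p).isClosedEmbedding.comp (LinearMap.isClosedEmbedding_of_injective hT)
  have hplane : IsPathConnected (e ⁻¹' K)ᶜ := isPathConnected_compl_of_isTotallyDisconnected_complex
    (he.isCompact_preimage hK) (he.isEmbedding.isTotallyDisconnected
      fun t ht ↦ hKd t (ht.trans (image_preimage_subset _ _)))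
  have he₀ : e 0 = p := by simp [e]
  have he₁ : e 1 = q := by simp [e, T]
  have hpq := (hplane.joinedIn 0 (by simpa [he₀]) 1 (by simpa [he₁])).map_continuousOn
    he.continuous.continuousOn
  rw [he₀, he₁] at hpq
  exact hpq.mono (image_subset_iff.2 subset_rfl)

section FundamentalGroupoid

open CategoryTheory FundamentalGroupoid

variable {X Y : Type*} [TopologicalSpace X] [TopologicalSpace Y]

theorem morphismProperty_of_isOpen_cover (P : MorphismProperty (FundamentalGroupoid X))
    [P.IsStableUnderComposition] {S : Set (Set X)} (hSo : ∀ s ∈ S, IsOpen s) (hS : ⋃₀ S = univ)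
    (hP : ∀ s ∈ S, ∀ ⦃x y : X⦄ (γ : Path x y), range γ ⊆ s → P (fromPath (.mk γ)))
    {x y : FundamentalGroupoid X} (p : x ⟶ y) : P p := by
  obtain ⟨x⟩ := x
  obtain ⟨y⟩ := y
  obtain ⟨γ, rfl⟩ := Path.Homotopic.Quotient.mk_surjective p
  obtain ⟨t, ht₀, htm, ⟨n, htn⟩, htS⟩ := exists_monotone_Icc_subset_open_cover_unitInterval
    (c := fun s : S ↦ γ ⁻¹' s) (fun s ↦ (hSo s s.2).preimage γ.continuous)
    (by rw [← preimage_iUnion, ← sUnion_eq_iUnion, hS, preimage_univ])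
  have hpiece (k : ℕ) : P (fromPath (.mk (γ.subpath (t k) (t (k + 1))))) := by
    obtain ⟨s, hs⟩ := htS k
    refine hP s s.2 _ ?_
    rw [γ.range_subpath_of_le _ _ (htm k.le_succ)]
    exact image_subset_iff.2 hs
  have hinitial (k : ℕ) : P (fromPath (.mk (γ.subpath (t 0) (t (k + 1))))) := by
    induction k with
    | zero => exact hpiece 0
    | succ k ih =>
      have hcomp := P.comp_mem _ _ ih (hpiece (k + 1))
      rwa [comp_eq, ← Path.Homotopic.Quotient.mk_trans, Path.Homotopic.Quotient.eq.2
        ⟨Path.Homotopy.subpathTransSubpath γ _ _ _⟩] at hcomp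
  have hcast {a b : X} (ha : a = x) (hb : b = y) (h : P (fromPath (.mk (γ.cast ha hb)))) :
      P (fromPath (.mk γ)) := by
    subst ha hb
    exact h
  have hwhole := hinitial n
  rw [ht₀, htn _ n.le_succ, Path.subpath_zero_one] at hwhole
  exact hcast _ _ hwhole

theorem simplyConnectedSpace_of_leftInverse_s3 {A Z : Type*} [TopologicalSpace A] [TopologicalSpace Z]
    [SimplyConnectedSpace Z] (s : C(A, Z)) (r : C(Z, A)) (h : Function.LeftInverse r s) :
    SimplyConnectedSpace A := by
  refine simply_connected_iff_paths_homotopic'.2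
    ⟨h.surjective.pathConnectedSpace r.continuous, fun {x y} γ δ ↦ ?_⟩
  have hmap (γ : Path x y) :
      ((γ.map s.continuous).map r.continuous).cast (h x).symm (h y).symm = γ :=
    Path.ext (funext fun t ↦ h (γ t))
  rw [← hmap γ, ← hmap δ]
  exact ((SimplyConnectedSpace.paths_homotopic _ _).map r).pathCast _ _

theorem homotopic_of_range_subset {W : Set Y} (hW : IsSimplyConnected W) {x y : Y}
    {γ δ : Path x y} (hγ : range γ ⊆ W) (hδ : range δ ⊆ W) : γ.Homotopic δ := by
  have := hW.simplyConnectedSpace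
  have hx : x ∈ W := hγ γ.source_mem_range
  have hy : y ∈ W := hγ γ.target_mem_range
  let lift (γ : Path x y) (hγ : range γ ⊆ W) : Path (⟨x, hx⟩ : W) ⟨y, hy⟩ :=
    { toFun t := ⟨γ t, hγ (mem_range_self t)⟩
      source' := by simp
      target' := by simp }
  exact (SimplyConnectedSpace.paths_homotopic (lift γ hγ) (lift δ hδ)).map
    ⟨_, continuous_subtype_val⟩

theorem trans_homotopic_trans_of_const {a b a' b' : Y} {γ : Path a b} {γ' : Path a' b'}
    {α : Path a a'} {β : Path b b'} (hγ : ∀ t, γ' t = γ t)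
    (hα : ∀ t, α t = a) (hβ : ∀ t, β t = b) : (γ.trans β).Homotopic (α.trans γ') := by
  obtain rfl : a' = a := by simpa using hα 1
  obtain rfl : b' = b := by simpa using hβ 1
  obtain rfl : γ' = γ := Path.ext (funext hγ)
  obtain rfl : α = Path.refl _ := Path.ext (funext hα)
  obtain rfl : β = Path.refl _ := Path.ext (funext hβ)
  exact (Path.Homotopic.trans_refl _).trans (Path.Homotopic.refl_trans _).symm

theorem exists_path_range_subset_of_eq_or_mem {W : Set Y} (hW : IsPathConnected W) {a b : Y}
    (h : a = b ∨ a ∈ W ∧ b ∈ W) :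
    ∃ τ : Path a b, (a ∈ W → range τ ⊆ W) ∧ (a = b → ∀ t, τ t = a) := by
  obtain rfl | hab := eq_or_ne a b
  · exact ⟨Path.refl a, fun ha ↦ range_subset_iff.2 fun _ ↦ ha, fun _ _ ↦ rfl⟩
  · obtain ⟨ha, hb⟩ := h.resolve_left hab
    have hjoined := hW.joinedIn a ha b hb
    exact ⟨hjoined.somePath, fun _ ↦ range_subset_iff.2 hjoined.somePath_mem, fun h ↦ (hab h).elim⟩

theorem nonempty_fundamentalGroupoid_map_iso_of_eqOn {f g : C(X, Y)} {U V : Set X} {W : Set Y}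
    (hU : IsOpen U) (hV : IsOpen V) (hUV : U ∪ V = univ)
    (hfg : EqOn f g V) (hf : MapsTo f U W) (hg : MapsTo g U W) (hW : IsSimplyConnected W) :
    Nonempty (FundamentalGroupoid.map f ≅ FundamentalGroupoid.map g) := by
  have hpath (x : X) : f x = g x ∨ f x ∈ W ∧ g x ∈ W :=
    (hUV.ge (mem_univ x)).symm.imp (hfg ·) fun hx ↦ ⟨hf hx, hg hx⟩
  choose τ hτW hτc using fun x ↦
    exists_path_range_subset_of_eq_or_mem hW.isPathConnected (hpath x)
  let app (x : FundamentalGroupoid X) : (map f).obj x ⟶ (map g).obj x := fromPath (.mk (τ x.as))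
  refine ⟨NatIso.ofComponents (fun x ↦ asIso (app x)) fun p ↦
    morphismProperty_of_isOpen_cover (MorphismProperty.naturalityProperty app)
      (S := {U, V}) (by simp [hU, hV]) (by simpa using hUV) ?_ p⟩
  have hsquare ⦃x y : X⦄ (γ : Path x y)
      (h : ((γ.map f.continuous).trans (τ y)).Homotopic ((τ x).trans (γ.map g.continuous))) :
      MorphismProperty.naturalityProperty app (fromPath (.mk γ)) :=
    Path.Homotopic.Quotient.eq.2 h
  rintro _ (rfl | rfl) x y γ hγ
  · have hx := hγ γ.source_mem_range
    have hy := hγ γ.target_mem_range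
    refine hsquare γ (homotopic_of_range_subset hW ?_ ?_)
    all_goals rw [Path.trans_range, union_subset_iff]
    · exact ⟨range_subset_iff.2 fun t ↦ hf (hγ (mem_range_self t)), hτW y (hf hy)⟩
    · exact ⟨hτW x (hf hx), range_subset_iff.2 fun t ↦ hg (hγ (mem_range_self t))⟩
  · exact hsquare γ (trans_homotopic_trans_of_const
      (fun t ↦ (hfg (hγ (mem_range_self t))).symm) (hτc x (hfg (hγ γ.source_mem_range)))
      (hτc y (hfg (hγ γ.target_mem_range))))

theorem nonempty_fundamentalGroup_mulEquiv [PathConnectedSpace Y]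
    (e : FundamentalGroupoid X ≌ FundamentalGroupoid Y) (x : X) (y : Y) :
    Nonempty (FundamentalGroup X x ≃* FundamentalGroup Y y) :=
  ⟨(e.fullyFaithfulFunctor.mulEquivEnd (.mk x)).trans
    (FundamentalGroup.fundamentalGroupMulEquivOfPathConnected (e.functor.obj (.mk x)).as y)⟩

end FundamentalGroupoid

section HalfSpace

open CategoryTheory FundamentalGroupoid

variable {E : Type*} [AddCommGroup E] [Module ℝ E] [TopologicalSpace E] [IsTopologicalAddGroup E]
  [ContinuousSMul ℝ E] {f : E →L[ℝ] ℝ} {w : E} {u : ℝ}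

/-- The map that pushes the points of `{z | f z < u}` along `w` onto the hyperplane `{z | f z = u}`
and fixes the other points. It is used with `f w = 1`, when it is a retraction onto the closed half
space `{z | u ≤ f z}`; the retraction onto `{z | f z ≤ u}` is
`halfSpaceRetraction (-f) (-w) (-u)`. -/
def halfSpaceRetraction (f : E →L[ℝ] ℝ) (w : E) (u : ℝ) : C(E, E) :=
  ⟨fun z ↦ z + max (u - f z) 0 • w, by fun_prop⟩

theorem halfSpaceRetraction_apply (z : E) :
    halfSpaceRetraction f w u z = z + max (u - f z) 0 • w :=
  rfl

theorem halfSpaceRetraction_of_le {z : E} (hz : u ≤ f z) : halfSpaceRetraction f w u z = z := by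
  simp [halfSpaceRetraction_apply, hz]

theorem map_halfSpaceRetraction (hw : f w = 1) (z : E) :
    f (halfSpaceRetraction f w u z) = max u (f z) := by
  simp [halfSpaceRetraction_apply, hw, add_max]

variable {A B : Set E}

theorem mapsTo_halfSpaceRetraction (hw : f w = 1) (hA : ∀ a ∈ A, f a < u)
    (hB : ∀ b ∈ B, u < f b) : MapsTo (halfSpaceRetraction f w u) Bᶜ (A ∪ B)ᶜ := by
  rintro z hzB (hA' | hB')
  · exact (hA _ hA').not_ge (map_halfSpaceRetraction hw z ▸ le_max_left _ _)
  · obtain hz | hz := le_total u (f z)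
    · exact hzB (halfSpaceRetraction_of_le hz ▸ hB')
    · exact (hB _ hB').ne' (by rw [map_halfSpaceRetraction hw, max_eq_left hz])

/-- The restriction of `halfSpaceRetraction f w u` to a map `Bᶜ → (A ∪ B)ᶜ`, when the hyperplane
`{z | f z = u}` separates `A` from `B`. -/
def complRetraction (hw : f w = 1) (hA : ∀ a ∈ A, f a < u) (hB : ∀ b ∈ B, u < f b) :
    C(↥Bᶜ, ↥(A ∪ B)ᶜ) :=
  ⟨(mapsTo_halfSpaceRetraction hw hA hB).restrict,
    (halfSpaceRetraction f w u).continuous.restrict _⟩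

theorem coe_complRetraction (hw : f w = 1) (hA : ∀ a ∈ A, f a < u) (hB : ∀ b ∈ B, u < f b)
    (z : ↥Bᶜ) : (complRetraction hw hA hB z : E) = halfSpaceRetraction f w u z :=
  rfl

theorem homotopic_inclusion_comp_complRetraction (hw : f w = 1) (hA : ∀ a ∈ A, f a < u)
    (hB : ∀ b ∈ B, u < f b) :
    ((ContinuousMap.id ↥Bᶜ).Homotopic <| (ContinuousMap.inclusion <|
      compl_subset_compl.2 subset_union_right).comp (complRetraction hw hA hB)) := by
  have hsegment (s : unitInterval) (z : ↥Bᶜ) : (z + (s * max (u - f z) 0) • w : E) ∈ Bᶜ := by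
    intro hzB
    obtain hz | hz := le_total u (f z)
    · exact z.2 (by simpa [hz] using hzB)
    · have hlt := hB _ hzB
      simp only [map_add, map_smul, hw, smul_eq_mul, mul_one, max_eq_left (sub_nonneg.2 hz)] at hlt
      linarith [mul_le_of_le_one_left (sub_nonneg.2 hz) s.2.2]
  refine ⟨⟨⟨fun q ↦ ⟨_, hsegment q.1 q.2⟩, by fun_prop⟩, fun z ↦ ?_, fun z ↦ ?_⟩⟩
  · exact Subtype.ext (by simp)
  · exact Subtype.ext (congrArg (fun t ↦ (z : E) + t • w) (one_mul (max (u - f z) 0)))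

theorem isSimplyConnected_upperHalf_compl_union (hw : f w = 1) (hA : ∀ a ∈ A, f a < u)
    (hB : ∀ b ∈ B, u < f b) [SimplyConnectedSpace ↥Bᶜ] :
    IsSimplyConnected {x : ↥(A ∪ B)ᶜ | u ≤ f x} := by
  let s : C({x : ↥(A ∪ B)ᶜ | u ≤ f x}, ↥Bᶜ) :=
    (ContinuousMap.inclusion (compl_subset_compl.2 subset_union_right)).comp
      ⟨_, continuous_subtype_val⟩
  let r : C(↥Bᶜ, {x : ↥(A ∪ B)ᶜ | u ≤ f x}) :=
    ⟨fun z ↦ ⟨complRetraction hw hA hB z, by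
      simp [coe_complRetraction, map_halfSpaceRetraction hw]⟩, by fun_prop⟩
  exact simplyConnectedSpace_of_leftInverse_s3 s r fun x ↦
    Subtype.ext (Subtype.ext (halfSpaceRetraction_of_le x.2))

theorem isSimplyConnected_lowerHalf_compl_union (hw : f w = 1) (hA : ∀ a ∈ A, f a < u)
    (hB : ∀ b ∈ B, u < f b) [SimplyConnectedSpace ↥Aᶜ] :
    IsSimplyConnected {x : ↥(A ∪ B)ᶜ | f x ≤ u} := by
  rw [union_comm]
  simpa using isSimplyConnected_upperHalf_compl_union (f := -f) (w := -w) (u := -u) (A := B)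
    (B := A) (by simpa) (by simpa) (by simpa)

variable {v : ℝ}

theorem nonempty_fundamentalGroupoid_compl_union_equivalence (hw : f w = 1)
    (hA : ∀ a ∈ A, f a < u) (huv : u < v) (hB : ∀ b ∈ B, v < f b) [SimplyConnectedSpace ↥Aᶜ] :
    Nonempty (FundamentalGroupoid ↥(A ∪ B)ᶜ ≌ FundamentalGroupoid ↥Bᶜ) := by
  have hBu (b) (hb : b ∈ B) : u < f b := huv.trans (hB b hb)
  have hAv (a) (ha : a ∈ A) : f a < v := (hA a ha).trans huv
  let i : C(↥(A ∪ B)ᶜ, ↥Bᶜ) := .inclusion (compl_subset_compl.2 subset_union_right)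
  let σ : C(↥Bᶜ, ↥(A ∪ B)ᶜ) := complRetraction hw hA hBu
  have hfc : Continuous fun x : ↥(A ∪ B)ᶜ ↦ f x := by fun_prop
  have hσi : EqOn (ContinuousMap.id _) (σ.comp i) {x : ↥(A ∪ B)ᶜ | u < f x} := fun x hx ↦
    Subtype.ext (halfSpaceRetraction_of_le hx.out.le).symm
  have hidW : MapsTo (ContinuousMap.id _) {x : ↥(A ∪ B)ᶜ | f x < v} {x | f x ≤ v} :=
    fun x hx ↦ hx.out.le
  have hσiW : MapsTo (σ.comp i) {x | f x < v} {x | f x ≤ v} := fun x hx ↦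
    (map_halfSpaceRetraction hw _).trans_le (max_le huv.le hx.out.le)
  obtain ⟨η⟩ := nonempty_fundamentalGroupoid_map_iso_of_eqOn
    (isOpen_Iio.preimage hfc) (isOpen_Ioi.preimage hfc)
    (eq_univ_of_forall fun x ↦ (huv.gt_or_lt (f x)).symm) hσi
    hidW hσiW (isSimplyConnected_lowerHalf_compl_union hw hAv hB)
  obtain ⟨H⟩ := homotopic_inclusion_comp_complRetraction hw hA hBu
  refine ⟨.mk (map i) (map σ) ?_ ?_⟩
  · simpa using η
  · simpa using (asIso (FundamentalGroupoidFunctor.homotopicMapsNatIso H)).symm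

end HalfSpace

theorem stmt_3_general {E : Type*} [AddCommGroup E] [Module ℝ E] [TopologicalSpace E]
    [IsTopologicalAddGroup E] [ContinuousSMul ℝ E] [LocallyConvexSpace ℝ E]
    {K₁ K₂ C₁ C₂ : Set E} (hK₁ : K₁.Nonempty) (hK₁c : IsCompact K₁) (hK₁x : Convex ℝ K₁)
    (hK₂ : K₂.Nonempty) (hK₂c : IsClosed K₂) (hK₂x : Convex ℝ K₂) (hdisj : Disjoint K₁ K₂)
    (hC₁ : C₁ ⊆ K₁) (hC₂ : C₂ ⊆ K₂) [SimplyConnectedSpace ↥C₁ᶜ] [PathConnectedSpace ↥C₂ᶜ]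
    (x : ↥(C₁ ∪ C₂)ᶜ) (y : ↥C₂ᶜ) :
    Nonempty (FundamentalGroup ↥(C₁ ∪ C₂)ᶜ x ≃* FundamentalGroup ↥C₂ᶜ y) := by
  obtain ⟨f, u, v, hfu, huv, hvf⟩ :=
    geometric_hahn_banach_compact_closed hK₁x hK₁c hK₂x hK₂c hdisj
  obtain ⟨w, hw⟩ : ∃ w, f w = 1 := by
    obtain ⟨a, ha⟩ := hK₁
    obtain ⟨b, hb⟩ := hK₂
    have hab : f (b - a) ≠ 0 := by
      rw [map_sub, sub_ne_zero]
      exact ((hfu a ha).trans (huv.trans (hvf b hb))).ne'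
    exact ⟨(f (b - a))⁻¹ • (b - a), by simp only [map_smul, smul_eq_mul, inv_mul_cancel₀ hab]⟩
  obtain ⟨e⟩ := nonempty_fundamentalGroupoid_compl_union_equivalence hw
    (fun a ha ↦ hfu a (hC₁ ha)) huv (fun b hb ↦ hvf b (hC₂ hb))
  exact nonempty_fundamentalGroup_mulEquiv e x y

/-- For Cantor sets in disjoint closed balls, if the complement of the first is simply
connected then the fundamental group of the complement of the union is isomorphic to the
fundamental group of the complement of the second. -/
theorem stmt_3 (c₁ c₂ : R3) (r₁ r₂ : ℝ)
    (C₁ C₂ : Set R3) (h₁ : IsCantorSubset C₁) (h₂ : IsCantorSubset C₂)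
    (hdisj : Disjoint (closedBall c₁ r₁) (closedBall c₂ r₂))
    (hB₁ : C₁ ⊆ closedBall c₁ r₁) (hB₂ : C₂ ⊆ closedBall c₂ r₂)
    (hsc : SimplyConnectedSpace ↥(C₁ᶜ)) :
    ∀ (x : R3) (hx : x ∈ (C₁ ∪ C₂)ᶜ) (y : R3) (hy : y ∈ C₂ᶜ),
      Nonempty (FundamentalGroup ↥((C₁ ∪ C₂)ᶜ) ⟨x, hx⟩ ≃*
        FundamentalGroup ↥(C₂ᶜ) ⟨y, hy⟩) := by
  intro x hx y hy
  have hrank : 1 < Module.rank ℝ R3 := Module.lt_rank_of_lt_finrank (by simp)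
  have := isPathConnected_iff_pathConnectedSpace.1
    (isPathConnected_compl_of_isTotallyDisconnected hrank h₂.2.1 h₂.2.2.2)
  exact stmt_3_general (h₁.1.mono hB₁) (isCompact_closedBall c₁ r₁) (convex_closedBall c₁ r₁)
    (h₂.1.mono hB₂) isClosed_closedBall (convex_closedBall c₂ r₂) hdisj hB₁ hB₂ ⟨x, hx⟩ ⟨y, hy⟩
end
end
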